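/- arXiv:2510.25400 — 7 statements merged into one kernel-verified Lean document; each statement's English description precedes it below -/
import Mathlib

section
/- Let n ≥ d ≥ 4000 be integers and κ ≥ 1. Let Φ : {1,…,d}^n → Δ_d be an estimator such that, writing P̂_n = Φ(X_1, …, X_n) for an i.i.d. sample X_1, …, X_n from P, for every P ∈ Δ_d the event {χ²(P, P̂_n) ≤ κd/n} has positive probability. Then for every δ ∈ (e^{-n}, e^{-6.32κ}) there exists a distribution P ∈ Δ_d such that the probability that χ²(P, P̂_n) ≥ C₂ · (d + log²(1/δ))/n is at least δ, where C₂ = 1/(10000κ). -/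
open Finset
open scoped ENNReal

/-- Probability of an event `E` under an i.i.d. sample of size `n` from the
distribution `p` on `{1, …, d}`. -/
noncomputable def sampleProb {n d : ℕ} (p : Fin d → ℝ) (E : Set (Fin n → Fin d)) : ℝ :=
  ∑ x : Fin n → Fin d, Set.indicator E (fun y => ∏ i, p (y i)) x

/-- χ²-divergence, valued in `ℝ≥0∞`: a term with `q j = 0` and `p j ≠ q j`
contributes `+∞` (and contributes `0` if `p j = q j`). -/
noncomputable def chiSqE {d : ℕ} (p q : Fin d → ℝ) : ℝ≥0∞ :=
  ∑ j, ENNReal.ofReal ((p j - q j) ^ 2) / ENNReal.ofReal (q j)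

lemma sp_mono {n d : ℕ} (p : Fin d → ℝ) (hp : ∀ j, 0 ≤ p j) {E F : Set (Fin n → Fin d)}
    (h : E ⊆ F) : sampleProb p E ≤ sampleProb p F := by
  unfold sampleProb
  refine Finset.sum_le_sum fun x _ => ?_
  exact Set.indicator_le_indicator_of_subset h
    (fun y => Finset.prod_nonneg fun i _ => hp _) x

lemma sp_union {n d : ℕ} (p : Fin d → ℝ) (hp : ∀ j, 0 ≤ p j) (E F : Set (Fin n → Fin d)) :
    sampleProb p (E ∪ F) ≤ sampleProb p E + sampleProb p F := by
  classical
  unfold sampleProb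
  rw [← Finset.sum_add_distrib]
  refine Finset.sum_le_sum fun x _ => ?_
  have h0 : 0 ≤ ∏ i, p (x i) := Finset.prod_nonneg fun i _ => hp _
  by_cases h1 : x ∈ E <;> by_cases h2 : x ∈ F <;> simp [h1, h2, h0]

lemma sp_unseen {n d : ℕ} (p : Fin d → ℝ) (S : Set (Fin d)) :
    sampleProb (n := n) p {x | ∀ i, x i ∉ S} = (∑ j, Set.indicator Sᶜ p j) ^ n := by
  classical
  rw [Fintype.sum_pow]
  unfold sampleProb
  refine Finset.sum_congr rfl fun x _ => ?_
  by_cases h : ∀ i, x i ∉ S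
  · rw [Set.indicator_of_mem (by exact h)]
    refine Finset.prod_congr rfl fun i _ => ?_
    rw [Set.indicator_of_mem (by exact h i)]
  · rw [Set.indicator_of_notMem (by exact h)]
    push Not at h
    obtain ⟨i, hi⟩ := h
    symm
    apply Finset.prod_eq_zero (Finset.mem_univ i)
    rw [Set.indicator_of_notMem (by simpa using hi)]

lemma sp_const {n d : ℕ} (p : Fin d → ℝ) (hp : ∀ j, 0 ≤ p j) (a : Fin d)
    (E : Set (Fin n → Fin d)) (h : (fun _ => a) ∈ E) : p a ^ n ≤ sampleProb p E := by
  unfold sampleProb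
  have := Finset.single_le_sum (f := fun x => Set.indicator E (fun y => ∏ i, p (y i)) x)
    (s := Finset.univ) (fun x _ => Set.indicator_nonneg
      (fun y _ => Finset.prod_nonneg fun i _ => hp _) x) (Finset.mem_univ (fun _ : Fin n => a))
  simpa [Set.indicator_of_mem h] using this

lemma exp_bd (x : ℝ) (h0 : 0 ≤ x) (h1 : x ≤ 1) : Real.exp (-x) ≤ 1 - 0.632 * x := by
  have h := convexOn_exp.2 (Set.mem_univ (0:ℝ)) (Set.mem_univ (-1:ℝ)) (show 0 ≤ 1 - x by linarith) h0 (by ring)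
  simp only [smul_eq_mul, mul_zero, zero_add, mul_neg, mul_one, Real.exp_zero] at h
  have he : Real.exp (-1) ≤ 0.368 := by
    rw [Real.exp_neg]
    have := Real.exp_one_gt_d9
    rw [inv_le_comm₀ (by positivity) (by norm_num)]
    norm_num at this ⊢
    linarith
  nlinarith

lemma coord_le {d : ℕ} (p q : Fin d → ℝ) (j : Fin d) :
    ENNReal.ofReal ((p j - q j) ^ 2) / ENNReal.ofReal (q j) ≤ chiSqE p q := by
  unfold chiSqE
  exact Finset.single_le_sum (f := fun j => ENNReal.ofReal ((p j - q j) ^ 2) / ENNReal.ofReal (q j))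
    (fun _ _ => zero_le) (Finset.mem_univ j)

lemma le_term (T v q : ℝ) (hT : 0 ≤ T) (hpos : 0 < (v - q) ^ 2) (h : T * q ≤ (v - q) ^ 2) :
    ENNReal.ofReal T ≤ ENNReal.ofReal ((v - q) ^ 2) / ENNReal.ofReal q := by
  rw [ENNReal.le_div_iff_mul_le (Or.inr (by rw [Ne, ENNReal.ofReal_eq_zero]; exact not_le.2 hpos)) (Or.inl ENNReal.ofReal_ne_top),
    ← ENNReal.ofReal_mul hT]
  exact ENNReal.ofReal_le_ofReal h

lemma two_case (h q : ℝ) (hh : 0 < h) :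
    ENNReal.ofReal (h / 4) ≤ ENNReal.ofReal ((h - q) ^ 2) / ENNReal.ofReal q ∨
    ENNReal.ofReal (h / 4) ≤ ENNReal.ofReal ((0 - q) ^ 2) / ENNReal.ofReal q := by
  by_cases hc : q < h / 4
  · left
    apply le_term _ _ _ (by positivity) (by nlinarith) (by nlinarith)
  · right
    apply le_term _ _ _ (by positivity) (by nlinarith) (by nlinarith)

lemma regime_one (n d : ℕ) (hdn : d ≤ n) (hd : 4000 ≤ d)
    (κ : ℝ) (hκ : 1 ≤ κ)
    (Φ : (Fin n → Fin d) → (Fin d → ℝ))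
    (hΦ : ∀ x, (∀ j, 0 ≤ Φ x j) ∧ ∑ j, Φ x j = 1)
    (hgood : ∀ p : Fin d → ℝ, (∀ j, 0 ≤ p j) → ∑ j, p j = 1 →
      0 < sampleProb p {x | chiSqE p (Φ x) ≤ ENNReal.ofReal (κ * d / n)})
    (L : ℝ) (hL1 : 6.32 * κ < L) (hL2 : L < n) (hdL : (d : ℝ) ≤ 1000 * L ^ 2) :
    ∃ p : Fin d → ℝ, (∀ j, 0 ≤ p j) ∧ (∑ j, p j = 1) ∧
      Real.exp (-L) ≤ sampleProb p {x |
        ENNReal.ofReal ((1 / (10000 * κ)) * (((d : ℝ) + L ^ 2) / n)) ≤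
          chiSqE p (Φ x)} := by
  classical
  have hn : (4000:ℝ) ≤ n := by exact_mod_cast hd.trans hdn
  have hdr : (4000:ℝ) ≤ d := by exact_mod_cast hd
  have hn0 : (0:ℝ) < n := by linarith
  let a : Fin d := ⟨0, by omega⟩
  set Q := Φ (fun _ => a) with hQ
  have hQ0 := (hΦ (fun _ => a)).1
  have h1 : chiSqE (Pi.single a 1) Q ≤ ENNReal.ofReal (κ * d / n) := by
    by_contra hcon
    have := hgood (Pi.single a 1) (fun j => by
      by_cases h : j = a
      · subst h; simp
      · simp [h]) (by simp)
    refine absurd this (not_lt.2 (le_of_eq ?_))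
    unfold sampleProb
    refine Finset.sum_eq_zero fun x _ => ?_
    by_cases hx : ∀ i, x i = a
    · have : x = fun _ => a := funext hx
      rw [this]
      exact Set.indicator_of_notMem (s := {x | chiSqE (Pi.single a 1) (Φ x) ≤ ENNReal.ofReal (κ * d / n)}) (by exact hcon) _
    · push Not at hx
      obtain ⟨i, hi⟩ := hx
      have hz : ∏ i, (Pi.single a 1 : Fin d → ℝ) (x i) = 0 :=
        Finset.prod_eq_zero (Finset.mem_univ i) (by simp [hi])
      exact Set.indicator_apply_eq_zero.2 (fun _ => hz)
  have h2 : ∑ j ∈ Finset.univ.erase a, Q j ≤ κ * d / n := by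
    rw [← ENNReal.ofReal_le_ofReal_iff (by positivity), ENNReal.ofReal_sum_of_nonneg
      (fun j _ => hQ0 j)]
    refine le_trans ?_ h1
    unfold chiSqE
    refine le_trans ?_ (Finset.sum_le_sum_of_subset (Finset.erase_subset a Finset.univ))
    refine Finset.sum_le_sum fun j hj => ?_
    have hja : j ≠ a := (Finset.mem_erase.1 hj).1
    rw [Pi.single_eq_of_ne hja]
    rcases (hQ0 j).eq_or_lt with h | h
    · rw [← hQ] at h
      rw [← hQ, ← h]
      simp
    · rw [← hQ] at h
      exact le_term _ _ _ h.le (by nlinarith) (by nlinarith)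
  obtain ⟨j, hja, hj⟩ : ∃ j, j ≠ a ∧ Q j ≤ 1.001 * κ / n := by
    by_contra hcon
    push Not at hcon
    have h3 : ∑ j ∈ Finset.univ.erase a, (1.001 * κ / n) ≤ ∑ j ∈ Finset.univ.erase a, Q j :=
      Finset.sum_le_sum fun j hj => (hcon j (Finset.mem_erase.1 hj).1).le
    rw [Finset.sum_const, Finset.card_erase_of_mem (Finset.mem_univ a), Finset.card_univ,
      Fintype.card_fin, nsmul_eq_mul, Nat.cast_sub (by omega)] at h3
    have h4 := h3.trans h2
    rw [← mul_div_assoc, div_le_div_iff_of_pos_right hn0] at h4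
    push_cast at h4
    nlinarith
  have hx0 : 0 ≤ L / n := by apply div_nonneg <;> linarith
  have hx1 : L / n ≤ 1 := by rw [div_le_one hn0]; exact hL2.le
  have hexp := exp_bd _ hx0 hx1
  set r := Real.exp (-(L / n)) with hr
  have hr0 : 0 < r := Real.exp_pos _
  let p : Fin d → ℝ := fun i => (if i = a then r else 0) + (if i = j then 1 - r else 0)
  have hp0 : ∀ i, 0 ≤ p i := by
    intro i
    have : 0 ≤ 1 - r := by linarith
    dsimp only [p]
    split_ifs <;> linarith
  refine ⟨p, hp0, by simp [p, Finset.sum_add_distrib], ?_⟩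
  have hpa : p a ^ n = Real.exp (-L) := by
    have : p a = r := by simp [p, hja.symm]
    rw [this, hr, ← Real.exp_nat_mul]
    congr 1
    field_simp
  rw [← hpa]
  apply sp_const p hp0
  refine le_trans ?_ (coord_le _ _ j)
  have hpj : p j = 1 - r := by simp [p, hja]
  rw [hpj, ← hQ]
  set y := L / n with hy
  have hy0 : 0 < y := by apply div_pos <;> linarith
  have hkn : κ / n ≤ y / 6.32 := by
    rw [hy, div_div, div_le_div_iff₀ hn0 (by positivity)]
    nlinarith
  have hqy : Q j ≤ 0.16 * y := by
    rw [mul_div_assoc] at hj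
    norm_num at hkn hj ⊢
    linarith
  have hdiff : 0.47 * y ≤ 1 - r - Q j := by norm_num at *; linarith
  have hsq : 0.2 * y ^ 2 ≤ (1 - r - Q j) ^ 2 := by norm_num at *; nlinarith
  have hT0 : 0 ≤ (1 / (10000 * κ)) * (((d : ℝ) + L ^ 2) / n) := by positivity
  apply le_term _ _ _ hT0
  · nlinarith
  · refine le_trans (mul_le_mul_of_nonneg_left hj hT0) (le_trans ?_ hsq)
    have : (1 / (10000 * κ)) * (((d : ℝ) + L ^ 2) / n) * (1.001 * κ / n)
        = 1.001 / 10000 * ((d : ℝ) + L ^ 2) / n ^ 2 := by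
      field_simp
    rw [this, hy, div_pow, ← mul_div_assoc, div_le_div_iff_of_pos_right (by positivity)]
    norm_num at *
    nlinarith

section
variable {K d : ℕ} (e : Option (Fin K × Bool) ↪ Fin d) (h : ℝ)

noncomputable def pb (b : Fin K → Bool) (j : Fin d) : ℝ :=
  (if j = e none then 1 - K * h else 0) + ∑ k, (if j = e (some (k, b k)) then h else 0)

lemma pb_nonneg (hh : 0 ≤ h) (hK : K * h ≤ 1) (b : Fin K → Bool) (j : Fin d) :
    0 ≤ pb e h b j := by
  unfold pb
  apply add_nonneg
  · split_ifs <;> linarith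
  · refine Finset.sum_nonneg fun k _ => ?_
    split_ifs <;> linarith

lemma pb_sum (b : Fin K → Bool) : ∑ j, pb e h b j = 1 := by
  unfold pb
  rw [Finset.sum_add_distrib, Finset.sum_comm]
  simp

lemma pb_at (b : Fin K → Bool) (k : Fin K) (v : Bool) :
    pb e h b (e (some (k, v))) = if v = b k then h else 0 := by
  unfold pb
  have : ∀ k', (if e (some (k, v)) = e (some (k', b k')) then h else 0)
      = if k = k' then (if v = b k then h else 0) else 0 := by
    intro k'
    by_cases hk : k = k'
    · subst hk; simp
    · simp [hk]
  simp_rw [this]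
  simp

lemma pb_flip (b b' : Fin K → Bool) (k : Fin K) (hb : ∀ k', k' ≠ k → b' k' = b k')
    (j : Fin d) (hj : ∀ v, j ≠ e (some (k, v))) : pb e h b' j = pb e h b j := by
  unfold pb
  congr 1
  refine Finset.sum_congr rfl fun k' _ => ?_
  by_cases hk : k' = k
  · subst hk; simp [hj]
  · rw [hb k' hk]

lemma pb_rest (b : Fin K → Bool) (k : Fin K) :
    ∑ j, Set.indicator {j | ∃ v, j = e (some (k, v))}ᶜ (pb e h b) j = 1 - h := by
  classical
  have h1 := pb_sum e h b
  have h2 : ∀ j, pb e h b j = Set.indicator {j | ∃ v, j = e (some (k, v))}ᶜ (pb e h b) j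
      + if j = e (some (k, b k)) then h else 0 := by
    intro j
    by_cases hj : ∃ v, j = e (some (k, v))
    · rw [Set.indicator_of_notMem (show j ∉ {j | ∃ v, j = e (some (k, v))}ᶜ from fun hc => hc hj)]
      obtain ⟨v, rfl⟩ := hj
      rw [pb_at]
      simp
    · rw [Set.indicator_of_mem (by exact hj)]
      push Not at hj
      simp [hj]
  have h3 : ∑ j, (if j = e (some (k, b k)) then h else 0) = h := by simp
  have h4 := Finset.sum_congr rfl (fun j (_ : j ∈ Finset.univ) => h2 j)
  rw [Finset.sum_add_distrib, h1, h3] at h4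
  linarith

/-- the set on which the coordinate loss is large -/
def bad {n : ℕ} (Φ : (Fin n → Fin d) → (Fin d → ℝ)) (k : Fin K) (v : Bool) :
    Set (Fin n → Fin d) :=
  {x | ENNReal.ofReal (h / 4) ≤ ENNReal.ofReal (((if true = v then h else 0)
    - Φ x (e (some (k, true)))) ^ 2) / ENNReal.ofReal (Φ x (e (some (k, true))))}

lemma bad_pair {n : ℕ} (Φ : (Fin n → Fin d) → (Fin d → ℝ)) (hh : 0 < h) (hK : K * h ≤ 1)
    (hn : n * h ≤ 1 / 2) (hh1 : h ≤ 1)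
    (b b' : Fin K → Bool) (k : Fin K) (hb : ∀ k', k' ≠ k → b' k' = b k') (hbk : b' k = !(b k)) :
    1 / 2 ≤ sampleProb (pb e h b) (bad e h Φ k (b k)) +
      sampleProb (pb e h b') (bad e h Φ k (b' k)) := by
  set U : Set (Fin n → Fin d) := {x | ∀ i, x i ∉ {j | ∃ v, j = e (some (k, v))}} with hU
  have h1 : 1 / 2 ≤ sampleProb (pb e h b) U := by
    rw [hU, sp_unseen, pb_rest]
    have := one_add_mul_le_pow (a := -h) (by linarith) n
    rw [sub_eq_add_neg]
    linarith
  have hp := pb_nonneg e h hh.le hK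
  have h2 : sampleProb (pb e h b) (U ∩ bad e h Φ k (b' k)) =
      sampleProb (pb e h b') (U ∩ bad e h Φ k (b' k)) := by
    unfold sampleProb
    refine Finset.sum_congr rfl fun x _ => ?_
    by_cases hx : x ∈ U ∩ bad e h Φ k (b' k)
    · rw [Set.indicator_of_mem hx, Set.indicator_of_mem hx]
      refine Finset.prod_congr rfl fun i _ => ?_
      refine (pb_flip e h b b' k hb _ ?_).symm
      intro v hv
      exact hx.1 i ⟨v, hv⟩
    · rw [Set.indicator_of_notMem hx, Set.indicator_of_notMem hx]
  have h3 : U ⊆ (bad e h Φ k (b k)) ∪ (U ∩ bad e h Φ k (b' k)) := by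
    intro x hx
    have h4 := two_case h (Φ x (e (some (k, true)))) hh
    rw [hbk]
    by_cases hv : b k = true
    · rcases h4 with h4 | h4
      · left; simpa [bad, hv] using h4
      · right; exact ⟨hx, by simpa [bad, hv] using h4⟩
    · simp only [Bool.not_eq_true] at hv
      rcases h4 with h4 | h4
      · right; exact ⟨hx, by simpa [bad, hv] using h4⟩
      · left; simpa [bad, hv] using h4
  have h5 := (sp_mono _ (hp b) h3).trans (sp_union _ (hp b) _ _)
  have h6 := sp_mono _ (hp b') (Set.inter_subset_right (s := U) (t := bad e h Φ k (b' k)))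
  linarith

lemma bad_avg {n : ℕ} (Φ : (Fin n → Fin d) → (Fin d → ℝ)) (hh : 0 < h) (hK : K * h ≤ 1)
    (hn : n * h ≤ 1 / 2) (hh1 : h ≤ 1) (k : Fin K) :
    ∑ _b : Fin K → Bool, (1 / 4 : ℝ) ≤
      ∑ b : Fin K → Bool, sampleProb (pb e h b) (bad e h Φ k (b k)) := by
  classical
  let σ : (Fin K → Bool) → (Fin K → Bool) := fun b => Function.update b k (!(b k))
  have hσ : Function.Involutive σ := by
    intro b
    simp [σ]
  have h1 := Equiv.sum_comp hσ.toPerm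
    (fun b : Fin K → Bool => sampleProb (pb e h b) (bad e h Φ k (b k)))
  have h2 : ∑ _b : Fin K → Bool, (1 / 2 : ℝ) ≤ ∑ b : Fin K → Bool,
      (sampleProb (pb e h b) (bad e h Φ k (b k)) +
      sampleProb (pb e h (σ b)) (bad e h Φ k (σ b k))) := by
    refine Finset.sum_le_sum fun b _ => ?_
    apply bad_pair e h Φ hh hK hn hh1
    · intro k' hk'; simp [σ, hk']
    · simp [σ]
  rw [Finset.sum_add_distrib] at h2
  simp only [Function.Involutive.coe_toPerm] at h1
  rw [h1] at h2
  simp only [Finset.sum_const, nsmul_eq_mul] at h2 ⊢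
  linarith

lemma chi_ge {n : ℕ} (Φ : (Fin n → Fin d) → (Fin d → ℝ)) (hh : 0 < h)
    (b : Fin K → Bool) (x : Fin n → Fin d) :
    ENNReal.ofReal ((∑ k, Set.indicator (bad e h Φ k (b k)) (fun _ => (1:ℝ)) x) * (h / 4))
      ≤ chiSqE (pb e h b) (Φ x) := by
  classical
  rw [Finset.sum_mul, ENNReal.ofReal_sum_of_nonneg]
  swap
  · intro k _
    exact mul_nonneg (Set.indicator_nonneg (fun _ _ => zero_le_one) _) (by positivity)
  unfold chiSqE
  let f : Fin d → ℝ≥0∞ := fun j =>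
    ENNReal.ofReal ((pb e h b j - Φ x j) ^ 2) / ENNReal.ofReal (Φ x j)
  have hinj : Function.Injective (fun k : Fin K => e (some (k, true))) := by
    intro k k' hk
    simpa using hk
  have h1 : ∑ k : Fin K, f (e (some (k, true))) ≤ ∑ j, f j := by
    have h2 := Finset.sum_image (f := f) (s := (Finset.univ : Finset (Fin K)))
      (g := fun k : Fin K => e (some (k, true))) (hinj.injOn)
    rw [← h2]
    exact Finset.sum_le_sum_of_subset (Finset.subset_univ _)
  refine le_trans (Finset.sum_le_sum fun k _ => ?_) h1
  by_cases hx : x ∈ bad e h Φ k (b k)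
  · rw [Set.indicator_of_mem hx]
    simp only [f, pb_at, one_mul]
    exact hx
  · rw [Set.indicator_of_notMem hx]
    simp

lemma exists_b {n : ℕ} (Φ : (Fin n → Fin d) → (Fin d → ℝ)) (hh : 0 < h) (hK : K * h ≤ 1)
    (hn : n * h ≤ 1 / 2) (hh1 : h ≤ 1) (hK0 : 0 < K) (T : ℝ) (hT : T ≤ K / 10 * (h / 4)) :
    ∃ b : Fin K → Bool, 0.15 ≤ sampleProb (pb e h b)
      {x | ENNReal.ofReal T ≤ chiSqE (pb e h b) (Φ x)} := by
  classical
  by_contra hcon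
  push Not at hcon
  have hKr : (0:ℝ) < K := by exact_mod_cast hK0
  have hp := pb_nonneg e h hh.le hK
  have h1 : ∀ b : Fin K → Bool, ∑ k, sampleProb (pb e h b) (bad e h Φ k (b k)) < K / 4 := by
    intro b
    set E := {x | ENNReal.ofReal T ≤ chiSqE (pb e h b) (Φ x)} with hE
    have hsum : ∑ x : Fin n → Fin d, ∏ i, pb e h b (x i) = 1 := by
      rw [← Fintype.sum_pow, pb_sum, one_pow]
    have h2 : ∑ k, sampleProb (pb e h b) (bad e h Φ k (b k)) ≤
        K / 10 + K * sampleProb (pb e h b) E := by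
      have : (K:ℝ) / 10 = K / 10 * ∑ x : Fin n → Fin d, ∏ i, pb e h b (x i) := by
        rw [hsum, mul_one]
      rw [this]
      unfold sampleProb
      rw [Finset.sum_comm, Finset.mul_sum, Finset.mul_sum, ← Finset.sum_add_distrib]
      refine Finset.sum_le_sum fun x _ => ?_
      have hw : 0 ≤ ∏ i, pb e h b (x i) := Finset.prod_nonneg fun i _ => hp b _
      set w := ∏ i, pb e h b (x i) with hwdef
      have h3 : ∀ F : Set (Fin n → Fin d), F.indicator (fun y => ∏ i, pb e h b (y i)) x
          = F.indicator (fun _ => (1:ℝ)) x * w := by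
        intro F
        by_cases hF : x ∈ F <;> simp [hF, hwdef]
      simp only [h3]
      rw [← Finset.sum_mul, ← mul_assoc, ← add_mul]
      refine mul_le_mul_of_nonneg_right ?_ hw
      by_cases hx : x ∈ E
      · rw [Set.indicator_of_mem hx]
        have : ∑ k, Set.indicator (bad e h Φ k (b k)) (fun _ => (1:ℝ)) x ≤ ∑ k : Fin K, 1 := by
          refine Finset.sum_le_sum fun k _ => ?_
          exact Set.indicator_le_self' (fun _ _ => zero_le_one) x
        simp at this
        linarith
      · rw [Set.indicator_of_notMem hx]
        by_contra hlt
        push Not at hlt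
        apply hx
        refine le_trans (ENNReal.ofReal_le_ofReal ?_) (chi_ge e h Φ hh b x)
        refine hT.trans (mul_le_mul_of_nonneg_right ?_ (by positivity))
        linarith
    have h4 := hcon b
    rw [← hE] at h4
    norm_num at h4
    nlinarith
  have h5 := Finset.sum_lt_sum_of_nonempty (s := (Finset.univ : Finset (Fin K → Bool)))
    Finset.univ_nonempty (fun b _ => h1 b)
  rw [Finset.sum_comm] at h5
  have h6 := Finset.sum_le_sum (s := (Finset.univ : Finset (Fin K)))
    (fun k _ => bad_avg e h Φ hh hK hn hh1 k)
  have h7 := h6.trans_lt h5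
  simp only [Finset.sum_const, nsmul_eq_mul, Finset.card_univ, Fintype.card_fin] at h7
  linarith

end

theorem lower_bound_conf_indep (n d : ℕ) (hdn : d ≤ n) (hd : 4000 ≤ d)
    (κ : ℝ) (hκ : 1 ≤ κ)
    (Φ : (Fin n → Fin d) → (Fin d → ℝ))
    (hΦ : ∀ x, (∀ j, 0 ≤ Φ x j) ∧ ∑ j, Φ x j = 1)
    (hgood : ∀ p : Fin d → ℝ, (∀ j, 0 ≤ p j) → ∑ j, p j = 1 →
      0 < sampleProb p {x | chiSqE p (Φ x) ≤ ENNReal.ofReal (κ * d / n)})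
    (δ : ℝ) (hδl : Real.exp (-(n : ℝ)) < δ) (hδu : δ < Real.exp (-(6.32 * κ))) :
    ∃ p : Fin d → ℝ, (∀ j, 0 ≤ p j) ∧ (∑ j, p j = 1) ∧
      δ ≤ sampleProb p {x |
        ENNReal.ofReal ((1 / (10000 * κ)) * (((d : ℝ) + Real.log (1 / δ) ^ 2) / n)) ≤
          chiSqE p (Φ x)} := by
  have hδ0 : 0 < δ := (Real.exp_pos _).trans hδl
  have hn : (4000:ℝ) ≤ n := by exact_mod_cast hd.trans hdn
  have hdr : (4000:ℝ) ≤ d := by exact_mod_cast hd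
  have hdnr : (d:ℝ) ≤ n := by exact_mod_cast hdn
  have hn0 : (0:ℝ) < n := by linarith
  set L := Real.log (1 / δ) with hL
  have hLe : L = - Real.log δ := by rw [hL, one_div, Real.log_inv]
  have hδL : δ = Real.exp (-L) := by rw [hLe, neg_neg, Real.exp_log hδ0]
  have hL2 : L < n := by
    rw [hδL, Real.exp_lt_exp] at hδl; linarith
  have hL1 : 6.32 * κ < L := by
    rw [hδL, Real.exp_lt_exp] at hδu; linarith
  by_cases hdL : (d : ℝ) ≤ 1000 * L ^ 2
  · rw [hδL]
    exact regime_one n d hdn hd κ hκ Φ hΦ hgood L hL1 hL2 hdL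
  · push Not at hdL
    obtain ⟨K, hK1, hK2⟩ : ∃ K : ℕ, 2 * K + 1 ≤ d ∧ d ≤ 3 * K := ⟨(d - 1) / 2, by omega, by omega⟩
    have hK1r : 2 * (K:ℝ) + 1 ≤ d := by exact_mod_cast hK1
    have hK2r : (d:ℝ) ≤ 3 * K := by exact_mod_cast hK2
    obtain ⟨e⟩ : Nonempty (Option (Fin K × Bool) ↪ Fin d) := by
      apply Function.Embedding.nonempty_of_card_le
      simp
      omega
    have hh : 0 < 1 / (2 * (n:ℝ)) := by positivity
    have hKh : (K:ℝ) * (1 / (2 * (n:ℝ))) ≤ 1 := by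
      rw [mul_one_div, div_le_one (by positivity)]; linarith
    obtain ⟨b, hb⟩ := exists_b e (1 / (2 * (n:ℝ))) Φ hh hKh
      (by apply le_of_eq; field_simp) (by rw [div_le_one (by positivity)]; linarith)
      (by omega) ((1 / (10000 * κ)) * (((d : ℝ) + L ^ 2) / n)) (by
        have h1 : 1 / (10000 * κ) ≤ 1 / 10000 := by
          apply one_div_le_one_div_of_le <;> linarith
        calc (1 / (10000 * κ)) * (((d : ℝ) + L ^ 2) / n)
            ≤ 1 / 10000 * ((2 * d) / n) := by
              gcongr
              nlinarith
          _ ≤ (K / 80) / n := by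
              rw [← mul_div_assoc]
              gcongr
              linarith
          _ = _ := by field_simp; ring)
    refine ⟨pb e _ b, pb_nonneg e _ hh.le hKh b, pb_sum e _ b, le_trans ?_ hb⟩
    have h1 : Real.exp (-(6.32 * κ)) ≤ 0.15 := by
      rw [Real.exp_neg]
      have h2 := Real.add_one_le_exp (6.32 * κ)
      have h3 : (7:ℝ) ≤ Real.exp (6.32 * κ) := by norm_num at *; linarith
      calc (Real.exp (6.32 * κ))⁻¹ ≤ 7⁻¹ := by gcongr
        _ ≤ 0.15 := by norm_num
    exact hδu.le.trans h1
end

section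
/- Let n ≥ 12 and d ≥ 2 be integers, and let δ ∈ (e^{-n/6}, e^{-2}). Define λ_δ = max{1, log(1/δ)/√d} and the confidence-dependent smoothed estimator P̂_{n,δ} with coordinates p̂_j = (N_j + λ_δ)/(n + λ_δ d), where N_j counts occurrences of class j in an i.i.d. sample X_1, …, X_n from P ∈ Δ_d. Then, with C₃ = 91190, the probability that χ²(P, P̂_{n,δ}) ≥ C₃ · ( d/n + √d·log(1/δ)/n + d·log²(1/δ)/n² ) is at most 4δ. -/
open Finset

/-- Count of class `j` in the sample `x`. -/
def count {n d : ℕ} (x : Fin n → Fin d) (j : Fin d) : ℕ :=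
  (Finset.univ.filter (fun i => x i = j)).card

/-- χ²-divergence between two vectors (all coordinates of `q` positive). -/
noncomputable def chiSq {d : ℕ} (p q : Fin d → ℝ) : ℝ :=
  ∑ j, (p j - q j) ^ 2 / q j



namespace CDU

lemma single {n d : ℕ} (p : Fin d → ℝ) (hp0 : ∀ j, 0 ≤ p j) (hp1 : ∑ j, p j = 1)
    (u : Fin d → ℝ) (hu : ∀ j, |u j| ≤ 1) :
    ∑ x : Fin n → Fin d, (∏ i, p (x i)) *
      ∏ j, Real.exp (u j * ((count x j : ℝ) - n * p j) - n * p j * (u j)^2) ≤ 1 := by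
  set v : ℝ := ∑ j, p j * (u j + (u j)^2) with hv
  have h1 : ∀ x : Fin n → Fin d,
      ∏ j, Real.exp (u j * ((count x j : ℝ) - n * p j) - n * p j * (u j)^2)
        = (∏ i, Real.exp (u (x i))) * Real.exp (-(n * v)) := by
    intro x
    rw [← Real.exp_sum, ← Real.exp_sum, ← Real.exp_add]
    congr 1
    have h2 : ∑ i, u (x i) = ∑ j, u j * (count x j : ℝ) := by
      rw [← Finset.sum_fiberwise (s := univ) (g := x)]
      refine Finset.sum_congr rfl fun j _ => ?_
      rw [Finset.sum_congr rfl (g := fun _ => u j)]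
      · simp [count, mul_comm]
      · intro i hi
        rw [(Finset.mem_filter.1 hi).2]
    rw [h2, hv, Finset.mul_sum, ← Finset.sum_neg_distrib, ← Finset.sum_add_distrib]
    refine Finset.sum_congr rfl fun j _ => ?_
    ring
  have h3 : ∑ x : Fin n → Fin d, (∏ i, p (x i)) *
      ∏ j, Real.exp (u j * ((count x j : ℝ) - n * p j) - n * p j * (u j)^2)
      = (∑ j, p j * Real.exp (u j)) ^ n * Real.exp (-(n * v)) := by
    rw [Fintype.sum_pow, Finset.sum_mul]
    refine Finset.sum_congr rfl fun x _ => ?_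
    rw [h1, Finset.prod_mul_distrib]; ring
  rw [h3]
  have h4 : ∑ j, p j * Real.exp (u j) ≤ Real.exp v := by
    calc ∑ j, p j * Real.exp (u j) ≤ ∑ j, (p j + p j * (u j + (u j)^2)) := by
          refine Finset.sum_le_sum fun j _ => ?_
          have := (abs_le.1 (Real.abs_exp_sub_one_sub_id_le (hu j))).2
          nlinarith [hp0 j]
      _ = v + 1 := by rw [Finset.sum_add_distrib, hp1]; ring
      _ ≤ _ := Real.add_one_le_exp v
  have h5 : 0 ≤ ∑ j, p j * Real.exp (u j) :=
    Finset.sum_nonneg fun j _ => mul_nonneg (hp0 j) (Real.exp_pos _).le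
  calc _ ≤ (Real.exp v)^n * Real.exp (-(n * v)) := by gcongr
    _ = 1 := by rw [← Real.exp_nat_mul, ← Real.exp_add]; simp

lemma mix {n d : ℕ} {ι : Type} [Fintype ι] (p : Fin d → ℝ) (hp0 : ∀ j, 0 ≤ p j)
    (hp1 : ∑ j, p j = 1) (G : Fin d → ℕ → ℝ) (a u : Fin d → ι → ℝ)
    (ha : ∀ j k, 0 ≤ a j k) (hu : ∀ j k, |u j k| ≤ 1)
    (hG0 : ∀ j N, 0 ≤ G j N)
    (hG : ∀ j (N : ℕ), N ≤ n → G j N ≤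
      ∑ k, a j k * Real.exp (u j k * ((N : ℝ) - n * p j) - n * p j * (u j k)^2)) :
    ∑ x : Fin n → Fin d, (∏ i, p (x i)) * ∏ j, G j (count x j) ≤ ∏ j, ∑ k, a j k := by
  classical
  have hw : ∀ x : Fin n → Fin d, 0 ≤ ∏ i, p (x i) := fun x =>
    Finset.prod_nonneg fun i _ => hp0 _
  calc _ ≤ ∑ x : Fin n → Fin d, (∏ i, p (x i)) * ∏ j, ∑ k, a j k *
        Real.exp (u j k * ((count x j : ℝ) - n * p j) - n * p j * (u j k)^2) := by
        refine Finset.sum_le_sum fun x _ => mul_le_mul_of_nonneg_left ?_ (hw x)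
        refine Finset.prod_le_prod (fun j _ => hG0 _ _) fun j _ => hG j _ ?_
        exact (Finset.card_le_univ _).trans (by simp)
    _ = ∑ κ : Fin d → ι, (∏ j, a j (κ j)) * ∑ x : Fin n → Fin d, (∏ i, p (x i)) * ∏ j,
        Real.exp (u j (κ j) * ((count x j : ℝ) - n * p j) - n * p j * (u j (κ j))^2) := by
        simp_rw [Finset.prod_univ_sum, Finset.mul_sum, Fintype.piFinset_univ]
        rw [Finset.sum_comm]
        refine Finset.sum_congr rfl fun κ _ => Finset.sum_congr rfl fun x _ => ?_
        rw [Finset.prod_mul_distrib]; ring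
    _ ≤ ∑ κ : Fin d → ι, (∏ j, a j (κ j)) * 1 := by
        refine Finset.sum_le_sum fun κ _ => mul_le_mul_of_nonneg_left ?_ 
          (Finset.prod_nonneg fun j _ => ha _ _)
        exact single p hp0 hp1 (fun j => u j (κ j)) (fun j => hu _ _)
    _ = _ := by
        simp_rw [Finset.prod_univ_sum, Fintype.piFinset_univ, mul_one]

noncomputable def hh (μ N : ℝ) : ℝ := (N - μ)^2 / max N μ

noncomputable def uu (μ : ℝ) (m : ℕ) : ℝ := if (m:ℝ) ≤ μ then Real.sqrt (m / μ) / 2 else 1/2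

lemma uu_nonneg (μ : ℝ) (m : ℕ) : 0 ≤ uu μ m := by
  unfold uu; split_ifs <;> positivity

lemma uu_le (μ : ℝ) (m : ℕ) : uu μ m ≤ 1/2 := by
  unfold uu; split_ifs with h
  · have : Real.sqrt (m / μ) ≤ 1 := by
      apply Real.sqrt_le_one.2
      exact div_le_one_of_le₀ h (le_trans (Nat.cast_nonneg m) h)
    linarith
  · exact le_rfl

lemma hh_key {μ N : ℝ} (hμ : 0 ≤ μ) (hN : 0 ≤ N) (m : ℕ) (hm : (m : ℝ) ≤ hh μ N) :
    (m : ℝ)/4 ≤ uu μ m * |N - μ| - μ * (uu μ m)^2 := by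
  have hm0 : (0:ℝ) ≤ m := Nat.cast_nonneg m
  rcases eq_or_lt_of_le hm0 with h0 | h0
  · have : uu μ m = 0 := by unfold uu; simp [← h0, hμ]
    rw [this, ← h0]; simp
  have hmax : 0 < max N μ := by
    by_contra hc
    have : max N μ = 0 := le_antisymm (not_lt.1 hc) (le_max_of_le_left hN)
    unfold hh at hm; rw [this, div_zero] at hm; linarith
  unfold hh at hm
  rw [le_div_iff₀ hmax] at hm
  rw [← sq_abs] at hm
  set t := |N - μ| with ht
  have ht0 : 0 ≤ t := abs_nonneg _
  have htm : t ≤ max N μ := by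
    rw [ht, abs_le]
    exact ⟨by linarith [le_max_right N μ], by linarith [le_max_left N μ]⟩
  have h1 : m * μ ≤ t^2 := le_trans (mul_le_mul_of_nonneg_left (le_max_right _ _) hm0) hm
  have h2 : (m:ℝ) ≤ t := by
    by_contra hc
    push Not at hc
    nlinarith
  unfold uu
  split_ifs with h
  · have hμ' : 0 < μ := lt_of_lt_of_le h0 h
    set r := Real.sqrt (m / μ) with hr
    have hr2 : r^2 = m / μ := Real.sq_sqrt (by positivity)
    have hr3 : μ * r^2 = m := by rw [hr2]; field_simp
    have hr0 : 0 ≤ r := Real.sqrt_nonneg _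
    have h3 : (m:ℝ) ≤ r * t := by
      apply le_of_sq_le_sq _ (by positivity)
      have : (r*t)^2 = (m/μ) * t^2 := by rw [mul_pow, hr2]
      rw [this, div_mul_eq_mul_div, le_div_iff₀ hμ']
      nlinarith
    nlinarith
  · push Not at h
    nlinarith

lemma quad_mgf {n d : ℕ} (p : Fin d → ℝ) (hp0 : ∀ j, 0 ≤ p j) (hp1 : ∑ j, p j = 1) :
    ∑ x : Fin n → Fin d, (∏ i, p (x i)) *
      Real.exp ((∑ j, hh (n * p j) (count x j)) / 8) ≤ Real.exp (4 * d) := by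
  have hple : ∀ j, p j ≤ 1 := fun j => by
    rw [← hp1]; exact Finset.single_le_sum (fun i _ => hp0 i) (Finset.mem_univ j)
  have key := mix (n := n) (ι := Fin (n+1) × Bool) p hp0 hp1
    (fun j N => Real.exp (hh (n * p j) N / 8))
    (fun j k => Real.exp (1/8) * Real.exp (-1/8) ^ (k.1 : ℕ))
    (fun j k => if k.2 then uu (n * p j) k.1 else - uu (n * p j) k.1)
    (fun j k => by positivity)
    (fun j k => by
      have h1 := uu_nonneg (n * p j) k.1
      have h2 := uu_le (n * p j) k.1
      split_ifs <;> rw [abs_le] <;> constructor <;> linarith)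
    (fun j N => (Real.exp_pos _).le) ?_
  · calc _ = ∑ x : Fin n → Fin d, (∏ i, p (x i)) *
        ∏ j, Real.exp (hh (n * p j) (count x j) / 8) := by
          simp_rw [← Real.exp_sum, Finset.sum_div]
      _ ≤ _ := key
      _ ≤ ∏ j : Fin d, Real.exp 4 := by
          refine Finset.prod_le_prod (fun j _ => by positivity) fun j _ => ?_
          rw [Fintype.sum_prod_type]
          simp only [Fintype.sum_bool]
          set r := Real.exp (-1/8) with hr
          have hr0 : 0 < r := Real.exp_pos _
          have he : Real.exp (1/8) * r = 1 := by rw [hr, ← Real.exp_add]; norm_num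
          have he1 : (9/8:ℝ) ≤ Real.exp (1/8) := by
            have := Real.add_one_le_exp (1/8:ℝ); linarith
          have hr1 : 7/8 ≤ r := by
            have := Real.add_one_le_exp (-1/8:ℝ); linarith
          have hr2 : r ≤ 8/9 := by nlinarith
          have he2 : Real.exp (1/8) ≤ 8/7 := by
            nlinarith [Real.exp_pos (1/8:ℝ)]
          have hg : ∑ i : Fin (n+1), r ^ (i:ℕ) ≤ 9 := by
            rw [Fin.sum_univ_eq_sum_range (fun i => r^i)]
            have := geom_sum_mul_neg r (n+1)
            have h3 : 0 < r^(n+1) := by positivity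
            have h4 : 0 ≤ ∑ i ∈ range (n+1), r ^ i := by positivity
            nlinarith
          have h4 : (24:ℝ) ≤ Real.exp 4 := by
            have h5 : Real.exp 4 = Real.exp 1 ^ 4 := by rw [← Real.exp_nat_mul]; norm_num
            have h6 := Real.exp_one_gt_d9
            have h7 : (2.5:ℝ) ≤ Real.exp 1 := by linarith
            rw [h5]
            calc (24:ℝ) ≤ 2.5^4 := by norm_num
              _ ≤ _ := by gcongr
          have h0 : 0 ≤ ∑ i : Fin (n+1), r ^ (i:ℕ) := by positivity
          rw [Finset.sum_add_distrib, ← Finset.mul_sum]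
          nlinarith [Real.exp_pos (1/8:ℝ)]
      _ = _ := by
          rw [Finset.prod_const, ← Real.exp_nat_mul]; simp [mul_comm]
  · intro j N hN
    set μ := (n:ℝ) * p j with hμ
    have hμ0 : 0 ≤ μ := mul_nonneg (Nat.cast_nonneg _) (hp0 j)
    have hμn : μ ≤ n := by nlinarith [hple j, (Nat.cast_nonneg n : (0:ℝ) ≤ n)]
    have hNn : (N:ℝ) ≤ n := by exact_mod_cast hN
    have hN0 : (0:ℝ) ≤ N := Nat.cast_nonneg _
    have hh0 : 0 ≤ hh μ N := div_nonneg (sq_nonneg _) (le_max_of_le_left hN0)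
    have hhn : hh μ N ≤ n := by
      unfold hh
      refine div_le_of_le_mul₀ (le_max_of_le_left hN0) (Nat.cast_nonneg _) ?_
      have ha : max (N:ℝ) μ ≤ n := max_le hNn hμn
      have hb : |(N:ℝ) - μ| ≤ max (N:ℝ) μ := by
        rw [abs_le]
        exact ⟨by linarith [le_max_right (N:ℝ) μ], by linarith [le_max_left (N:ℝ) μ]⟩
      rw [← sq_abs]
      nlinarith [abs_nonneg ((N:ℝ) - μ)]
    set m := ⌊hh μ N⌋₊ with hm
    have hm1 : (m:ℝ) ≤ hh μ N := Nat.floor_le hh0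
    have hm2 : hh μ N < m + 1 := Nat.lt_floor_add_one _
    have hmn : m < n + 1 := by
      have : (m:ℝ) ≤ n := hm1.trans hhn
      have : m ≤ n := by exact_mod_cast this
      omega
    have hk := hh_key hμ0 hN0 m hm1
    refine le_trans ?_ (Finset.single_le_sum (fun k _ => by positivity)
      (Finset.mem_univ ((⟨m, hmn⟩ : Fin (n+1)), decide (μ ≤ N))))
    simp only
    rw [← Real.exp_nat_mul, ← Real.exp_add, ← Real.exp_add]
    apply Real.exp_le_exp.2
    by_cases hc : μ ≤ N
    · rw [abs_of_nonneg (by linarith)] at hk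
      simp only [hc, decide_true, if_true]
      linarith
    · rw [abs_of_neg (by linarith)] at hk
      simp only [hc, decide_false]
      simp only [Bool.false_eq_true, if_false]
      nlinarith

noncomputable def zz (A μ : ℝ) : ℝ := min (μ^2/A) μ

noncomputable def zb (A μ N : ℝ) : ℝ := if N < μ/2 then zz A μ else 0

lemma zz_nonneg {A μ : ℝ} (hA : 0 < A) (hμ : 0 ≤ μ) : 0 ≤ zz A μ :=
  le_min (by positivity) hμ

lemma bad_mgf {n d : ℕ} (p : Fin d → ℝ) (hp0 : ∀ j, 0 ≤ p j) (hp1 : ∑ j, p j = 1)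
    (A : ℝ) (hA : 0 < A) :
    ∑ x : Fin n → Fin d, (∏ i, p (x i)) *
      Real.exp ((∑ j, zb A (n * p j) (count x j)) / 32) ≤
      Real.exp ((∑ j, (n * p j)^2 * Real.exp (-(n * p j)/32)) / (32 * A)) := by
  have hμ0 : ∀ j, 0 ≤ (n:ℝ) * p j := fun j => mul_nonneg (Nat.cast_nonneg _) (hp0 j)
  have hz0 : ∀ j, 0 ≤ zz A (n * p j) := fun j => zz_nonneg hA (hμ0 j)
  have hb0 : ∀ j, 0 ≤ (Real.exp (zz A (n * p j) / 32) - 1) * Real.exp (-(n * p j)/16) := by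
    intro j
    have : 1 ≤ Real.exp (zz A (n * p j) / 32) := Real.one_le_exp (by linarith [hz0 j])
    exact mul_nonneg (by linarith) (Real.exp_pos _).le
  have key := mix (n := n) (ι := Bool) p hp0 hp1
    (fun j N => Real.exp (zb A (n * p j) N / 32))
    (fun j k => if k then 1 else
      (Real.exp (zz A (n * p j) / 32) - 1) * Real.exp (-(n * p j)/16))
    (fun j k => if k then 0 else -1/4)
    (fun j k => by
      split_ifs
      · exact zero_le_one
      · exact hb0 j)
    (fun j k => by split_ifs <;> rw [abs_le] <;> constructor <;> norm_num)
    (fun j N => (Real.exp_pos _).le) ?_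
  · calc _ = ∑ x : Fin n → Fin d, (∏ i, p (x i)) *
        ∏ j, Real.exp (zb A (n * p j) (count x j) / 32) := by
          simp_rw [← Real.exp_sum, Finset.sum_div]
      _ ≤ _ := key
      _ ≤ ∏ j : Fin d, Real.exp ((n * p j)^2 * Real.exp (-(n * p j)/32) / (32 * A)) := by
          refine Finset.prod_le_prod (fun j _ => ?_) fun j _ => ?_
          · simp only [Fintype.sum_bool, if_true, Bool.false_eq_true, if_false]
            linarith [hb0 j]
          simp only [Fintype.sum_bool, if_true, Bool.false_eq_true, if_false]
          refine le_trans ?_ (Real.add_one_le_exp _)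
          set μ := (n:ℝ) * p j
          set z := zz A μ
          have hz : 0 ≤ z := hz0 j
          have hz1 : z ≤ μ^2/A := min_le_left _ _
          have hz2 : z ≤ μ := min_le_right _ _
          have h1 : Real.exp (z/32) - 1 ≤ z/32 * Real.exp (z/32) := by
            have h2 := Real.add_one_le_exp (-(z/32))
            have h3 : Real.exp (-(z/32)) * Real.exp (z/32) = 1 := by
              rw [← Real.exp_add]; simp
            nlinarith [Real.exp_pos (z/32)]
          have h4 : Real.exp (z/32) * Real.exp (-μ/16) ≤ Real.exp (-μ/32) := by
            rw [← Real.exp_add]; apply Real.exp_le_exp.2; linarith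
          calc 1 + (Real.exp (z/32) - 1) * Real.exp (-μ/16)
              ≤ 1 + (z/32 * Real.exp (z/32)) * Real.exp (-μ/16) := by gcongr
            _ = 1 + z/32 * (Real.exp (z/32) * Real.exp (-μ/16)) := by ring
            _ ≤ 1 + (μ^2/A)/32 * Real.exp (-μ/32) := by gcongr
            _ = _ := by field_simp; ring
      _ = _ := by
          rw [← Real.exp_sum, Finset.sum_div]
  · intro j N hN
    simp only [Fintype.sum_bool, if_true, Bool.false_eq_true, if_false]
    have hb := hb0 j
    have hz := hz0 j
    have hm := hμ0 j
    set μ := (n:ℝ) * p j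
    unfold zb
    split_ifs with h
    · have h1 : 1 ≤ Real.exp (zz A μ / 32) := Real.one_le_exp (by linarith)
      have h2 : 1 ≤ Real.exp (-μ/16) * Real.exp (-1/4 * ((N:ℝ) - μ) - μ * (-1/4)^2) := by
        rw [← Real.exp_add]; apply Real.one_le_exp; linarith
      have h3 : Real.exp (0 * ((N:ℝ) - μ) - μ * 0^2) = 1 := by simp
      rw [h3]
      nlinarith
    · have h3 : Real.exp (0 * ((N:ℝ) - μ) - μ * 0^2) = 1 := by simp
      rw [h3]
      have := mul_nonneg hb (Real.exp_pos (-1/4 * ((N:ℝ) - μ) - μ * (-1/4)^2)).le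
      simp only [zero_div, Real.exp_zero]
      linarith

lemma sum_bound {n d : ℕ} (p : Fin d → ℝ) (hp0 : ∀ j, 0 ≤ p j) (hp1 : ∑ j, p j = 1) :
    ∑ j, ((n:ℝ) * p j)^2 * Real.exp (-(n * p j)/32) ≤ 1024 * min (n:ℝ) d := by
  have hμ0 : ∀ j, 0 ≤ (n:ℝ) * p j := fun j => mul_nonneg (Nat.cast_nonneg _) (hp0 j)
  have e1 : ∀ μ : ℝ, 0 ≤ μ → μ^2 * Real.exp (-μ/32) ≤ 1024 := by
    intro μ hμ
    have h1 := Real.quadratic_le_exp_of_nonneg (x := μ/64) (by positivity)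
    have h2 : μ/32 ≤ Real.exp (μ/64) := by nlinarith [sq_nonneg (μ/64 - 1)]
    have h3 : μ/32 * Real.exp (-μ/64) ≤ 1 := by
      have h4 : Real.exp (μ/64) * Real.exp (-μ/64) = 1 := by
        rw [← Real.exp_add]; ring_nf; simp
      nlinarith [Real.exp_pos (-μ/64)]
    have h5 : Real.exp (-μ/32) = Real.exp (-μ/64)^2 := by
      rw [← Real.exp_nat_mul]; congr 1; push_cast; ring
    have h6 : (μ/32 * Real.exp (-μ/64))^2 ≤ 1 := by
      apply pow_le_one₀ (by positivity) h3
    rw [h5]; nlinarith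
  have e2 : ∀ μ : ℝ, 0 ≤ μ → μ^2 * Real.exp (-μ/32) ≤ 1024 * μ := by
    intro μ hμ
    have h2 : μ/32 ≤ Real.exp (μ/32) := by linarith [Real.add_one_le_exp (μ/32)]
    have h4 : Real.exp (μ/32) * Real.exp (-μ/32) = 1 := by
      rw [← Real.exp_add]; ring_nf; simp
    have h3 : μ/32 * Real.exp (-μ/32) ≤ 1 := by
      nlinarith [Real.exp_pos (-μ/32)]
    nlinarith
  rw [mul_min_of_nonneg _ _ (by norm_num)]
  apply le_min
  · calc _ ≤ ∑ j, 1024 * ((n:ℝ) * p j) := Finset.sum_le_sum fun j _ => e2 _ (hμ0 j)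
      _ = _ := by rw [← Finset.mul_sum, ← Finset.mul_sum, hp1, mul_one]
  · calc _ ≤ ∑ j : Fin d, (1024:ℝ) := Finset.sum_le_sum fun j _ => e1 _ (hμ0 j)
      _ = _ := by simp [mul_comm]

lemma W_bound {d : ℕ} (μ N : Fin d → ℝ) (hμ : ∀ j, 0 ≤ μ j) (A : ℝ) (hA : 0 < A)
    (hZ : ∑ j, zb A (μ j) (N j) ≤ A) :
    ∑ j, (if N j < μ j / 2 then (μ j)^2 else 0) ≤ 2 * A^2 := by
  have h0 : ∀ j, 0 ≤ zb A (μ j) (N j) := by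
    intro j; unfold zb; split_ifs
    · exact zz_nonneg hA (hμ j)
    · exact le_rfl
  have h1 : ∀ j, zb A (μ j) (N j) ≤ A := fun j =>
    (Finset.single_le_sum (fun i _ => h0 i) (Finset.mem_univ j)).trans hZ
  calc _ ≤ ∑ j, 2 * A * zb A (μ j) (N j) := by
        refine Finset.sum_le_sum fun j _ => ?_
        have h2 := h0 j
        have h3 := h1 j
        unfold zb at *
        split_ifs with h
        · simp only [h, if_true] at h2 h3
          have h4 : (μ j)^2 ≤ A * zz A (μ j) + (zz A (μ j))^2 := by
            rcases min_choice ((μ j)^2/A) (μ j) with hc | hc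
            · have : A * zz A (μ j) = (μ j)^2 := by
                unfold zz; rw [hc]; field_simp
              nlinarith
            · have : zz A (μ j) = μ j := hc
              rw [this]
              nlinarith [hμ j]
          nlinarith
        · simp
    _ = 2 * A * ∑ j, zb A (μ j) (N j) := by rw [Finset.mul_sum]
    _ ≤ _ := by nlinarith

/-- per-coordinate deterministic bound -/
lemma coord {n d l p N : ℝ} (hn : 0 < n) (hd : 0 < d) (hl : 0 < l) (hp : 0 ≤ p) (hN : 0 ≤ N) :
    (p - (N + l)/(n + l*d))^2 / ((N + l)/(n + l*d)) ≤
      3 * (2 * hh (n*p) N / n + 2 * (l * d / n) * p + l / n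
        + (if N < n*p/2 then (n*p)^2 else 0) * (1/(n*l) + d/n^2)) := by
  have hM : 0 < n + l*d := by positivity
  have hNl : 0 < N + l := by positivity
  have e1 : (p - (N + l)/(n + l*d))^2 / ((N + l)/(n + l*d))
      = ((n*p - N) + l*d*p - l)^2 / ((n+l*d) * (N+l)) := by
    field_simp
    ring
  rw [e1]
  have e2 : ((n*p - N) + l*d*p - l)^2 ≤ 3 * ((N - n*p)^2 + (l*d*p)^2 + l^2) := by
    nlinarith [sq_nonneg ((n*p - N) - l*d*p), sq_nonneg ((n*p - N) + l), sq_nonneg (l*d*p + l)]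
  have e3 : l^2 / ((n+l*d) * (N+l)) ≤ l / n := by
    rw [div_le_div_iff₀ (by positivity) hn]
    have : l * n ≤ (n+l*d)*(N+l) := by nlinarith [mul_pos hl hd, mul_nonneg hn.le hN, mul_nonneg (mul_pos hl hd).le hNl.le]
    nlinarith
  have e4 : (N - n*p)^2 / ((n+l*d) * (N+l)) + (l*d*p)^2 / ((n+l*d) * (N+l)) ≤
      2 * hh (n*p) N / n + 2 * (l * d / n) * p
        + (if N < n*p/2 then (n*p)^2 else 0) * (1/(n*l) + d/n^2) := by
    have hh0 : 0 ≤ hh (n*p) N := div_nonneg (sq_nonneg _) (le_max_of_le_left hN)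
    split_ifs with h
    · have f1 : (N - n*p)^2 / ((n+l*d) * (N+l)) ≤ (n*p)^2 * (1/(n*l)) := by
        rw [mul_one_div]
        apply div_le_div₀ (by positivity) (by nlinarith) (by positivity)
        nlinarith [mul_pos hl hd, mul_nonneg hn.le hN, mul_nonneg (mul_pos hl hd).le hNl.le]
      have f2 : (l*d*p)^2 / ((n+l*d) * (N+l)) ≤ (n*p)^2 * (d/n^2) := by
        have : (n*p)^2 * (d/n^2) = (l*d*p)^2 / (l*d*l) := by field_simp
        rw [this]
        apply div_le_div_of_nonneg_left (by positivity) (by positivity)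
        nlinarith [mul_pos hl hd, mul_nonneg hn.le hN, mul_nonneg (mul_pos hl hd).le hN, mul_pos hn hl]
      have f3 : 0 ≤ 2 * hh (n*p) N / n := by positivity
      have f4 : 0 ≤ 2 * (l * d / n) * p := by positivity
      linarith
    · push Not at h
      rw [zero_mul, add_zero]
      rcases eq_or_lt_of_le hp with h0 | h0
      · subst h0
        simp only [mul_zero, sub_zero, add_zero]
        simp only [ne_eq, OfNat.ofNat_ne_zero, not_false_eq_true, zero_pow, zero_div, add_zero]
        unfold hh
        rw [max_eq_left hN]
        rcases eq_or_lt_of_le hN with h1 | h1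
        · subst h1; simp
        · have : 2 * ((N - 0)^2 / N) / n = 2 * N / n := by field_simp; ring
          rw [this, div_le_div_iff₀ (by positivity) hn]
          have : N * n ≤ (n+l*d)*(N+l) := by
            nlinarith [mul_pos hl hd, mul_pos hn hl, mul_nonneg (mul_pos hl hd).le hNl.le]
          nlinarith
      · have hnp : 0 < n * p := by positivity
        have f1 : (N - n*p)^2 / ((n+l*d) * (N+l)) ≤ 2 * hh (n*p) N / n := by
          have hmx : max N (n*p) ≤ 2 * (N + l) := max_le (by linarith) (by linarith)
          have hmx0 : 0 < max N (n*p) := lt_max_of_lt_right hnp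
          have : 2 * hh (n*p) N / n = (N-n*p)^2 / (n * max N (n*p) / 2) := by
            unfold hh; field_simp
          rw [this]
          apply div_le_div_of_nonneg_left (by positivity) (by positivity)
          nlinarith [mul_nonneg (mul_pos hl hd).le hNl.le]
        have f2 : (l*d*p)^2 / ((n+l*d) * (N+l)) ≤ 2 * (l * d / n) * p := by
          have : 2 * (l * d / n) * p = (l*d*p)^2 / (l*d*(n*p/2)) := by
            field_simp
          rw [this]
          apply div_le_div_of_nonneg_left (by positivity) (by positivity)
          have : n*p/2 ≤ N + l := by linarith
          nlinarith [mul_le_mul_of_nonneg_left this (mul_pos hl hd).le, mul_pos hn hNl]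
        linarith
  calc _ ≤ 3 * ((N - n*p)^2 + (l*d*p)^2 + l^2) / ((n+l*d) * (N+l)) := by gcongr
    _ = 3 * ((N - n*p)^2 / ((n+l*d) * (N+l)) + (l*d*p)^2 / ((n+l*d) * (N+l))
          + l^2 / ((n+l*d) * (N+l))) := by ring
    _ ≤ _ := by linarith

lemma chi_bound {n d : ℕ} (hn : 0 < n) (hd : 0 < d) (p N : Fin d → ℝ) (hp0 : ∀ j, 0 ≤ p j)
    (hp1 : ∑ j, p j = 1) (hN : ∀ j, 0 ≤ N j) (l H W : ℝ) (hl : 0 < l)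
    (hH : ∑ j, hh (n * p j) (N j) ≤ H)
    (hW : ∑ j, (if N j < n * p j / 2 then (n * p j)^2 else 0) ≤ W) :
    chiSq p (fun j => (N j + l) / (n + l * d)) ≤
      3 * (2 * H / n + 3 * (l * d / n) + W * (1/(n*l) + d/n^2)) := by
  have hn' : (0:ℝ) < n := by exact_mod_cast hn
  have hd' : (0:ℝ) < d := by exact_mod_cast hd
  unfold chiSq
  calc _ ≤ ∑ j, 3 * (2 * hh (n*p j) (N j) / n + 2 * (l * d / n) * p j + l / n
        + (if N j < n*p j/2 then (n*p j)^2 else 0) * (1/(n*l) + d/n^2)) :=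
        Finset.sum_le_sum fun j _ => coord hn' hd' hl (hp0 j) (hN j)
    _ = 3 * (2 * (∑ j, hh (n*p j) (N j)) / n + 2 * (l * d / n) * (∑ j, p j) + d * (l / n)
        + (∑ j, (if N j < n*p j/2 then (n*p j)^2 else 0)) * (1/(n*l) + d/n^2)) := by
        rw [← Finset.mul_sum]
        simp only [Finset.sum_add_distrib, ← Finset.mul_sum, ← Finset.sum_mul, ← Finset.sum_div]
        simp
        ring
    _ ≤ _ := by
        rw [hp1]
        have h1 : 2 * (∑ j, hh (n*p j) (N j)) / n ≤ 2 * H / n := by gcongr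
        have h2 : (∑ j, (if N j < n*p j/2 then (n*p j)^2 else 0)) * (1/(n*l) + d/n^2)
            ≤ W * (1/(n*l) + d/n^2) := by gcongr
        have h3 : (d:ℝ) * (l / n) = l * d / n := by ring
        rw [h3]
        linarith

lemma final_arith {n d L l : ℝ} (hn : 0 < n) (hd : 1 ≤ d) (hL : 0 < L)
    (hl : l = max 1 (L / Real.sqrt d)) :
    3 * (2 * (32 * d + 8 * L) / n + 3 * (l * d / n)
      + (2 * (32 * (Real.sqrt (min n d) + L))^2) * (1/(n*l) + d/n^2)) <
      91190 * (d / n + Real.sqrt d * L / n + d * L^2 / n^2) := by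
  set D := min n d with hD
  have hd0 : 0 < d := by linarith
  have hD0 : 0 < D := lt_min hn hd0
  have hDn : D ≤ n := min_le_left _ _
  have hDd : D ≤ d := min_le_right _ _
  set r := Real.sqrt d with hr
  have hr2 : r^2 = d := Real.sq_sqrt hd0.le
  have hr1 : 1 ≤ r := Real.one_le_sqrt.2 hd
  have hr0 : 0 < r := by linarith
  have hl1 : 1 ≤ l := hl ▸ le_max_left _ _
  have hl2 : L / r ≤ l := hl ▸ le_max_right _ _
  have hl3 : l ≤ 1 + L / r := by
    rw [hl]; apply max_le <;> [skip; skip] <;> have : 0 ≤ L / r := by positivity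
    all_goals linarith
  have hl0 : 0 < l := by linarith
  have hld : l * d ≤ d + r * L := by
    have : (1 + L / r) * d = d + r * L := by rw [← hr2]; field_simp
    nlinarith
  have hs : (Real.sqrt D)^2 = D := Real.sq_sqrt hD0.le
  have hW : 2 * (32 * (Real.sqrt D + L))^2 ≤ 4096 * (D + L^2) := by
    nlinarith [sq_nonneg (Real.sqrt D - L)]
  have hLl : L^2 / l ≤ r * L := by
    rw [div_le_iff₀ hl0]
    rw [div_le_iff₀ hr0] at hl2
    nlinarith
  have hDl : D / l ≤ d := by
    rw [div_le_iff₀ hl0]; nlinarith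
  have hc0 : 0 ≤ 1/(n*l) + d/n^2 := by positivity
  have t1 : (D + L^2) * (1/(n*l) + d/n^2) ≤ 2 * (d/n) + r*L/n + d*L^2/n^2 := by
    have : (D + L^2) * (1/(n*l) + d/n^2) = (D/l)/n + (L^2/l)/n + (D/n)*(d/n) + d*L^2/n^2 := by
      field_simp
      ring
    rw [this]
    have a1 : (D/l)/n ≤ d/n := by gcongr
    have a2 : (L^2/l)/n ≤ r*L/n := by gcongr
    have a3 : (D/n)*(d/n) ≤ 1*(d/n) := by
      gcongr; exact div_le_one_of_le₀ hDn hn.le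
    linarith
  have t2 : l * d / n ≤ d/n + r*L/n := by rw [← add_div]; gcongr
  have t3 : 2 * (32 * d + 8 * L) / n ≤ 64 * (d/n) + 16 * (r*L/n) := by
    have : 64 * (d/n) + 16 * (r*L/n) = (64 * d + 16*(r*L))/n := by ring
    rw [this]; gcongr; nlinarith
  have p1 : 0 < d/n := by positivity
  have p2 : 0 < r*L/n := by positivity
  have p3 : 0 < d*L^2/n^2 := by positivity
  have t4 := mul_le_mul_of_nonneg_right hW hc0
  nlinarith

end CDU

theorem conf_dependent_upper_bound (n d : ℕ) (hn : 12 ≤ n) (hd : 2 ≤ d)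
    (δ : ℝ) (hδl : Real.exp (-(n : ℝ) / 6) < δ) (hδu : δ < Real.exp (-2))
    (p : Fin d → ℝ) (hp0 : ∀ j, 0 ≤ p j) (hp1 : ∑ j, p j = 1) :
    sampleProb p {x : Fin n → Fin d |
      91190 * ((d : ℝ) / n + Real.sqrt d * Real.log (1 / δ) / n
          + (d : ℝ) * Real.log (1 / δ) ^ 2 / n ^ 2) ≤
        chiSq p (fun j =>
          ((count x j : ℝ) + max 1 (Real.log (1 / δ) / Real.sqrt d)) /
            ((n : ℝ) + max 1 (Real.log (1 / δ) / Real.sqrt d) * d))} ≤ 4 * δ := by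

  classical
  have hn0 : 0 < n := by omega
  have hd0 : 0 < d := by omega
  have hn' : (0:ℝ) < n := by exact_mod_cast hn0
  have hd' : (1:ℝ) ≤ d := by exact_mod_cast (by omega : 1 ≤ d)
  have hδ0 : 0 < δ := (Real.exp_pos _).trans hδl
  set L := Real.log (1/δ) with hLdef
  have hL' : L = - Real.log δ := by rw [hLdef, one_div, Real.log_inv]
  have hL0 : 0 < L := by
    have := (Real.log_lt_iff_lt_exp hδ0).2 hδu
    linarith
  have hexpL : Real.exp (-L) = δ := by rw [hL', neg_neg, Real.exp_log hδ0]
  set l := max 1 (L / Real.sqrt d) with hl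
  have hl0 : 0 < l := lt_of_lt_of_le one_pos (le_max_left _ _)
  set s := Real.sqrt (min (n:ℝ) d) with hs
  have hD0 : (0:ℝ) < min (n:ℝ) d := lt_min hn' (by linarith)
  have hs0 : 0 < s := Real.sqrt_pos.2 hD0
  have hs2 : s^2 = min (n:ℝ) d := Real.sq_sqrt hD0.le
  set A := 32 * (s + L) with hA
  have hA0 : 0 < A := by positivity
  have hw : ∀ x : Fin n → Fin d, 0 ≤ ∏ i, p (x i) := fun x =>
    Finset.prod_nonneg fun i _ => hp0 _
  have q1 : ∑ x : Fin n → Fin d, (∏ i, p (x i)) *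
      Real.exp ((∑ j, CDU.hh (n * p j) (count x j)) / 8 - (4 * d + L)) ≤ δ := by
    have h1 := CDU.quad_mgf (n := n) p hp0 hp1
    have h2 := mul_le_mul_of_nonneg_right h1 (Real.exp_pos (-(4*d+L))).le
    rw [Finset.sum_mul, ← Real.exp_add] at h2
    have h3 : (4 * (d:ℝ)) + -(4*d+L) = -L := by ring
    rw [h3, hexpL] at h2
    refine le_trans (le_of_eq ?_) h2
    refine Finset.sum_congr rfl fun x _ => ?_
    rw [mul_assoc, ← Real.exp_add, sub_eq_add_neg]
  have q2 : ∑ x : Fin n → Fin d, (∏ i, p (x i)) *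
      Real.exp ((∑ j, CDU.zb A (n * p j) (count x j)) / 32 - (s + L)) ≤ δ := by
    have h1 := CDU.bad_mgf (n := n) p hp0 hp1 A hA0
    have h2 := mul_le_mul_of_nonneg_right h1 (Real.exp_pos (-(s+L))).le
    rw [Finset.sum_mul, ← Real.exp_add] at h2
    have h3 : (∑ j, ((n:ℝ) * p j)^2 * Real.exp (-(n * p j)/32)) / (32 * A) + -(s+L) ≤ -L := by
      have h4 := CDU.sum_bound (n := n) p hp0 hp1
      have h5 : (∑ j, ((n:ℝ) * p j)^2 * Real.exp (-(n * p j)/32)) / (32 * A) ≤ s := by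
        rw [div_le_iff₀ (by positivity)]
        refine h4.trans ?_
        rw [← hs2, hA]
        nlinarith [mul_pos hs0 hL0]
      linarith
    have h6 := Real.exp_le_exp.2 h3
    rw [hexpL] at h6
    refine le_trans (le_of_eq ?_) (h2.trans h6)
    refine Finset.sum_congr rfl fun x _ => ?_
    rw [mul_assoc, ← Real.exp_add, sub_eq_add_neg]
  unfold sampleProb
  refine le_trans (Finset.sum_le_sum fun x _ => ?_) (b := ∑ x : Fin n → Fin d,
    ((∏ i, p (x i)) * Real.exp ((∑ j, CDU.hh (n * p j) (count x j)) / 8 - (4 * d + L))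
    + (∏ i, p (x i)) * Real.exp ((∑ j, CDU.zb A (n * p j) (count x j)) / 32 - (s + L)))) ?_
  · set a := (∑ j, CDU.hh (n * p j) (count x j)) / 8 - (4 * d + L) with ha
    set b := (∑ j, CDU.zb A (n * p j) (count x j)) / 32 - (s + L) with hb
    rw [← mul_add]
    have hpos : 0 ≤ (∏ i, p (x i)) * (Real.exp a + Real.exp b) :=
      mul_nonneg (hw x) (by positivity)
    refine Set.indicator_apply_le' (fun hx => ?_) (fun _ => hpos)
    have hab : 0 ≤ a ∨ 0 ≤ b := by
      by_contra hc
      push Not at hc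
      obtain ⟨hc1, hc2⟩ := hc
      have hW := CDU.W_bound (fun j => n * p j) (fun j => (count x j : ℝ))
        (fun j => mul_nonneg hn'.le (hp0 j)) A hA0 (by rw [hA]; linarith)
      have hchi := CDU.chi_bound hn0 hd0 p (fun j => (count x j : ℝ)) hp0 hp1
        (fun j => Nat.cast_nonneg _) l (32 * d + 8 * L) (2 * A^2) hl0 (by linarith) hW
      have hfin := CDU.final_arith hn' hd' hL0 hl
      have hx2 := Set.mem_ofPred_eq ▸ hx
      exact absurd (lt_of_le_of_lt hchi hfin) (not_lt.2 hx2)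
    have h1 : 1 ≤ Real.exp a + Real.exp b := by
      rcases hab with h | h
      · linarith [Real.one_le_exp h, Real.exp_pos b]
      · linarith [Real.one_le_exp h, Real.exp_pos a]
    nlinarith [hw x]
  · rw [Finset.sum_add_distrib]
    linarith
end

section
/- Let n ≥ d ≥ 5000 be integers and δ ∈ (e^{-n}, e^{-1}). For any estimator Φ : {1,…,d}^n → Δ_d (which may depend on δ), there exists a distribution P ∈ Δ_d such that, writing P̂_n = Φ(X_1, …, X_n) for an i.i.d. sample from P, the probability that χ²(P, P̂_n) ≥ C₄ · ( (d + √d·log(1/δ))/n + d·log²(1/δ)/n² ) is at least δ, where C₄ = 1/5000. -/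
open Finset
open scoped ENNReal

lemma term_ge (T p q : ℝ) (hq : 0 ≤ q) (hne : p ≠ q) (h : T * q ≤ (p - q) ^ 2) :
    ENNReal.ofReal T ≤ ENNReal.ofReal ((p - q) ^ 2) / ENNReal.ofReal q := by
  rw [ENNReal.le_div_iff_mul_le]
  · rw [← ENNReal.ofReal_mul' hq]
    exact ENNReal.ofReal_le_ofReal h
  · right
    have : 0 < (p - q) ^ 2 := by
      have : p - q ≠ 0 := sub_ne_zero.mpr hne
      positivity
    simpa using this.ne'
  · left; simp

lemma zero_term_ge (q : ℝ) (hq : 0 ≤ q) :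
    ENNReal.ofReal q ≤ ENNReal.ofReal (((0 : ℝ) - q) ^ 2) / ENNReal.ofReal q := by
  rcases hq.eq_or_lt with h | h
  · simp [← h]
  · exact term_ge _ _ _ hq h.ne (by nlinarith)

lemma pair_ge (b q r : ℝ) (hb : 0 < b) (hq : 0 ≤ q) (hqr : q ≤ r) :
    ENNReal.ofReal (4 / 5 * b) ≤ ENNReal.ofReal ((b - q) ^ 2) / ENNReal.ofReal q
      + ENNReal.ofReal (((0 : ℝ) - r) ^ 2) / ENNReal.ofReal r := by
  by_cases h : 4 / 5 * b ≤ r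
  · exact (ENNReal.ofReal_le_ofReal h).trans
      ((zero_term_ge r (hq.trans hqr)).trans le_add_self)
  · have h1 : ENNReal.ofReal (4 / 5 * b) = ENNReal.ofReal (4 / 5 * b - r) + ENNReal.ofReal r := by
      rw [← ENNReal.ofReal_add (by linarith) (by linarith)]
      congr 1; ring
    rw [h1]
    refine add_le_add ?_ (zero_term_ge r (hq.trans hqr))
    apply term_ge _ _ _ hq (by linarith)
    nlinarith [mul_nonneg hq (sub_nonneg.2 hqr), sq_nonneg (q - 7 / 10 * b)]

lemma sampleProb_ge_single {n d : ℕ} (p : Fin d → ℝ) (hp : ∀ j, 0 ≤ p j)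
    (E : Set (Fin n → Fin d)) (z : Fin d) (hz : (fun _ => z) ∈ E) :
    p z ^ n ≤ sampleProb p E := by
  unfold sampleProb
  have := Finset.single_le_sum (s := Finset.univ)
    (f := fun x => Set.indicator E (fun y : Fin n → Fin d => ∏ i, p (y i)) x)
    (fun x _ => Set.indicator_nonneg (fun y _ => Finset.prod_nonneg fun i _ => hp _) x)
    (Finset.mem_univ (fun _ => z))
  simpa [Set.indicator_of_mem hz] using this

lemma big_L (n d : ℕ) (z : Fin d) (hd : 5000 ≤ d) (δ T ε : ℝ)
    (hε0 : 0 < ε) (hε1 : ε ≤ 1 / 2) (hδ : δ ≤ (1 - ε) ^ n) (hδ1 : δ ≤ 1)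
    (hT : T ≤ (3 * Real.sqrt d * ε + 4 * d * ε ^ 2) / 5000) (hT0 : 0 ≤ T)
    (hεd : 1 ≤ d * ε ^ 2 ∨ Real.sqrt d * ε < 1)
    (Φ : (Fin n → Fin d) → (Fin d → ℝ))
    (hΦ : ∀ x, (∀ j, 0 ≤ Φ x j) ∧ ∑ j, Φ x j = 1) :
    ∃ p : Fin d → ℝ, (∀ j, 0 ≤ p j) ∧ (∑ j, p j = 1) ∧
      δ ≤ sampleProb p {x | ENNReal.ofReal T ≤ chiSqE p (Φ x)} := by
  have hdR : (5000 : ℝ) ≤ d := by exact_mod_cast hd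
  set s := Real.sqrt d with hs
  have hss : s * s = d := Real.mul_self_sqrt (by positivity)
  have hs70 : 70 ≤ s := by
    apply Real.le_sqrt_of_sq_le; linarith
  set q := Φ (fun _ => z) with hq
  obtain ⟨hq0, hq1⟩ := hΦ (fun _ => z)
  rw [← hq] at hq0 hq1
  have hsplit : q z + ∑ j ∈ Finset.univ.erase z, q j = 1 := by
    rw [← hq1]; exact Finset.add_sum_erase _ _ (Finset.mem_univ z)
  have hcard : (((Finset.univ.erase z).card : ℕ) : ℝ) = d - 1 := by
    rw [Finset.card_erase_of_mem (Finset.mem_univ z)]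
    simp only [Finset.card_univ, Fintype.card_fin]
    push_cast [Nat.cast_sub (show 1 ≤ d by omega)]; ring
  have hne : (Finset.univ.erase z).Nonempty := by
    rw [← Finset.card_pos]
    have : (0 : ℝ) < ((Finset.univ.erase z).card : ℕ) := by rw [hcard]; linarith
    exact_mod_cast this
  by_cases hA : T ≤ ∑ j ∈ Finset.univ.erase z, q j
  · refine ⟨fun j => if j = z then 1 else 0, ?_, ?_, ?_⟩
    · intro j; (try dsimp only); split_ifs <;> norm_num
    · simp
    · refine le_trans ?_ (sampleProb_ge_single _ ?_ _ z ?_)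
      · simpa using hδ1
      · intro j; (try dsimp only); split_ifs <;> norm_num
      · show ENNReal.ofReal T ≤ chiSqE _ q
        unfold chiSqE
        calc ENNReal.ofReal T ≤ ENNReal.ofReal (∑ j ∈ Finset.univ.erase z, q j) :=
              ENNReal.ofReal_le_ofReal hA
          _ = ∑ j ∈ Finset.univ.erase z, ENNReal.ofReal (q j) :=
              ENNReal.ofReal_sum_of_nonneg (fun j _ => hq0 j)
          _ ≤ ∑ j ∈ Finset.univ.erase z, ENNReal.ofReal (((if j = z then (1:ℝ) else 0) - q j) ^ 2)
                / ENNReal.ofReal (q j) := by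
              apply Finset.sum_le_sum
              intro j hj
              rw [if_neg (Finset.ne_of_mem_erase hj)]
              exact zero_term_ge _ (hq0 j)
          _ ≤ _ := Finset.sum_le_sum_of_subset (Finset.erase_subset _ _)
  · push Not at hA
    obtain ⟨j, hj, hjle⟩ : ∃ j ∈ Finset.univ.erase z,
        q j ≤ (∑ j ∈ Finset.univ.erase z, q j) / (d - 1) := by
      apply Finset.exists_le_of_sum_le hne
      rw [Finset.sum_const, nsmul_eq_mul, hcard]
      rw [mul_div_cancel₀ _ (by linarith)]
    have hjz : j ≠ z := Finset.ne_of_mem_erase hj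
    have hqj := hq0 j
    rw [le_div_iff₀ (by linarith)] at hjle
    have hle1 : ∑ j ∈ Finset.univ.erase z, q j ≤ 1 := by linarith [hq0 z]
    have key : q j ≤ ε / 2 ∧ T * q j ≤ (ε / 2) ^ 2 := by
      rcases hεd with h | h
      · have h1 : 1 ≤ s * ε := by
          by_contra hc
          push Not at hc
          have : 0 ≤ s * ε := by positivity
          nlinarith
        have h2 : q j * (d - 1) ≤ 1 := hjle.trans hle1
        have h3 : q j ≤ 2 / d := by
          rw [le_div_iff₀ (by linarith)]; nlinarith
        have h4 : (d : ℝ) * q j ≤ 2 := by nlinarith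
        constructor
        · have : s * (s * q j) ≤ 2 * (s * ε) := by
            calc s * (s * q j) = d * q j := by rw [← hss]; ring
              _ ≤ 2 := h4
              _ ≤ _ := by linarith
          have h5 : s * q j ≤ 2 * ε := by
            have : s * (s * q j) ≤ s * (2 * ε) := by linarith
            exact le_of_mul_le_mul_left this (by linarith)
          nlinarith
        · have hT' : T ≤ 7 * d * ε ^ 2 / 5000 := by nlinarith
          calc T * q j ≤ (7 * d * ε ^ 2 / 5000) * q j := by gcongr
            _ = 7 * ε ^ 2 / 5000 * (d * q j) := by ring
            _ ≤ 7 * ε ^ 2 / 5000 * 2 := by gcongr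
            _ ≤ _ := by nlinarith [sq_nonneg ε]
      · have hsε : 0 < s * ε := by positivity
        have hT' : T ≤ 7 * (s * ε) / 5000 := by
          have : d * ε ^ 2 = (s * ε) * (s * ε) := by rw [← hss]; ring
          nlinarith
        have h2 : q j * (d - 1) ≤ 7 * (s * ε) / 5000 := hjle.trans (hA.le.trans hT')
        have h4 : s * (s * q j) ≤ s * (14 * ε / 5000) := by
          have : s * (s * q j) = d * q j := by rw [← hss]; ring
          rw [this]; nlinarith
        have h5 : s * q j ≤ 14 * ε / 5000 := le_of_mul_le_mul_left h4 (by linarith)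
        constructor
        · nlinarith
        · calc T * q j ≤ (7 * (s * ε) / 5000) * q j := by gcongr
            _ = 7 * ε / 5000 * (s * q j) := by ring
            _ ≤ 7 * ε / 5000 * (14 * ε / 5000) := by gcongr
            _ ≤ _ := by nlinarith [sq_nonneg ε]
    obtain ⟨k1, k2⟩ := key
    have hp0 : ∀ i, 0 ≤ (if i = z then 1 - ε else 0) + (if i = j then ε else 0) := by
      intro i
      split_ifs <;> linarith
    refine ⟨fun i => (if i = z then 1 - ε else 0) + (if i = j then ε else 0), hp0, ?_, ?_⟩
    · simp [Finset.sum_add_distrib]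
    · refine le_trans ?_ (sampleProb_ge_single _ hp0 _ z ?_)
      · simpa [hjz.symm] using hδ
      · show ENNReal.ofReal T ≤ chiSqE _ q
        unfold chiSqE
        refine le_trans ?_ (Finset.single_le_sum (fun _ _ => zero_le) (Finset.mem_univ j))
        simp only [if_neg hjz, if_true, zero_add]
        apply term_ge _ _ _ hqj (by linarith)
        refine k2.trans ?_
        exact pow_le_pow_left₀ (by linarith) (by linarith) 2

/-- light atoms -/
def wAtom (d : ℕ) (k : Fin ((d - 1) / 2)) (s : Bool) : Fin d :=
  ⟨2 * k.1 + 1 + (if s then 1 else 0), by have := k.2; split_ifs <;> omega⟩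

lemma wAtom_inj {d : ℕ} {k l : Fin ((d - 1) / 2)} {s t : Bool} :
    wAtom d k s = wAtom d l t ↔ k = l ∧ s = t := by
  constructor
  · intro h
    have h' := congrArg Fin.val h
    simp only [wAtom] at h'
    cases s <;> cases t <;> simp at h' ⊢ <;> first | omega | (apply Fin.ext; omega)
  · rintro ⟨rfl, rfl⟩; rfl

/-- hypercube family -/
noncomputable def cubeP (d : ℕ) (z : Fin d) (b : ℝ) (σ : Fin ((d - 1) / 2) → Bool) (j : Fin d) : ℝ :=
  (if j = z then 1 - b * ((d - 1) / 2 : ℕ) else 0) + ∑ k, if j = wAtom d k (σ k) then b else 0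

lemma cubeP_nonneg (d : ℕ) (z : Fin d) (b : ℝ) (hb : 0 ≤ b) (hb1 : b * ((d - 1) / 2 : ℕ) ≤ 1)
    (σ : Fin ((d - 1) / 2) → Bool) (j : Fin d) : 0 ≤ cubeP d z b σ j := by
  unfold cubeP
  apply add_nonneg
  · split_ifs
    · linarith
    · rfl
  · apply Finset.sum_nonneg; intro k _; split_ifs
    · exact hb
    · rfl

lemma cubeP_sum (d : ℕ) (z : Fin d) (b : ℝ) (σ : Fin ((d - 1) / 2) → Bool) :
    ∑ j, cubeP d z b σ j = 1 := by
  unfold cubeP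
  rw [Finset.sum_add_distrib, Finset.sum_comm]
  simp
  ring

lemma cubeP_w (d : ℕ) (z : Fin d) (hz : z.1 = 0) (b : ℝ) (σ : Fin ((d - 1) / 2) → Bool) (k) (s) :
    cubeP d z b σ (wAtom d k s) = if s = σ k then b else 0 := by
  unfold cubeP
  have : wAtom d k s ≠ z := by
    intro h; have := congrArg Fin.val h; simp [wAtom] at this; omega
  rw [if_neg this]
  simp only [wAtom_inj, zero_add]
  rw [Finset.sum_eq_single k]
  · simp
  · intro l _ hl; rw [if_neg]; rintro ⟨h, _⟩; exact hl h.symm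
  · simp

/-- flip -/
def flipAt {K : ℕ} (k : Fin K) (σ : Fin K → Bool) : Fin K → Bool :=
  Function.update σ k (!σ k)

lemma flipAt_invol {K : ℕ} (k : Fin K) : Function.Involutive (flipAt k) := by
  intro σ
  unfold flipAt
  simp

lemma cubeP_flip (d : ℕ) (z : Fin d) (b : ℝ) (σ : Fin ((d - 1) / 2) → Bool) (k) (j : Fin d)
    (hj : ∀ s, j ≠ wAtom d k s) : cubeP d z b (flipAt k σ) j = cubeP d z b σ j := by
  unfold cubeP
  congr 1
  apply Finset.sum_congr rfl
  intro l _
  by_cases h : l = k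
  · subst h; rw [if_neg (hj _), if_neg (hj _)]
  · unfold flipAt; rw [Function.update_of_ne h]

/-- sample avoids pair `k` -/
def unseen {n d : ℕ} (k : Fin ((d - 1) / 2)) (x : Fin n → Fin d) : Prop :=
  ∀ i s, x i ≠ wAtom d k s

open Classical in
lemma unseen_prob (n d : ℕ) (z : Fin d) (hz : z.1 = 0) (b : ℝ) (hb : 0 ≤ b) (hb1 : b ≤ 1)
    (σ : Fin ((d - 1) / 2) → Bool) (k) :
    1 - n * b ≤ ∑ x : Fin n → Fin d, if unseen k x then ∏ i, cubeP d z b σ (x i) else 0 := by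
  set A : Finset (Fin d) := Finset.univ.filter (fun j => ∀ s, j ≠ wAtom d k s) with hA
  have h1 : ∑ j ∈ A, cubeP d z b σ j = 1 - b := by
    have h := cubeP_sum d z b σ
    rw [← Finset.sum_filter_add_sum_filter_not Finset.univ (fun j => ∀ s, j ≠ wAtom d k s)] at h
    have h2 : (Finset.univ.filter (fun j => ¬ ∀ s, j ≠ wAtom d k s))
        = {wAtom d k true, wAtom d k false} := by
      ext j; simp; tauto
    rw [h2, Finset.sum_pair (by simp [wAtom_inj]), cubeP_w _ _ hz, cubeP_w _ _ hz] at h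
    have h3 : (if true = σ k then b else 0) + (if false = σ k then b else 0) = b := by
      cases σ k <;> simp
    rw [h3] at h
    rw [hA]; linarith
  have h2 : ∑ x : Fin n → Fin d, (if unseen k x then ∏ i, cubeP d z b σ (x i) else 0)
      = (1 - b) ^ n := by
    rw [← Finset.sum_filter, ← h1]
    have := Finset.prod_univ_sum (fun _ : Fin n => A) (fun _ j => cubeP d z b σ j)
    simp only [Finset.prod_const, Finset.card_univ, Fintype.card_fin] at this
    rw [this]
    apply Finset.sum_congr _ (fun _ _ => rfl)
    ext x; simp [unseen, hA, Fintype.mem_piFinset]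
  rw [h2]
  have := one_add_mul_le_pow (show (-2 : ℝ) ≤ -b by linarith) n
  calc 1 - n * b = 1 + n * (-b) := by ring
    _ ≤ _ := this
    _ = _ := by ring

/-- lossy pair -/
def lossy {n d : ℕ} (Φ : (Fin n → Fin d) → (Fin d → ℝ)) (σ : Fin ((d - 1) / 2) → Bool)
    (x : Fin n → Fin d) (k : Fin ((d - 1) / 2)) : Prop :=
  Φ x (wAtom d k (σ k)) ≤ Φ x (wAtom d k (!σ k))

open Classical in
lemma half_lossy {n d : ℕ} (z : Fin d) (hz : z.1 = 0) (b : ℝ) (hb : 0 ≤ b) (hb1 : b ≤ 1)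
    (hbK : b * ((d - 1) / 2 : ℕ) ≤ 1)
    (Φ : (Fin n → Fin d) → (Fin d → ℝ)) (k : Fin ((d - 1) / 2)) :
    2 ^ ((d - 1) / 2) * (1 - n * b) ≤ 2 * ∑ σ : Fin ((d - 1) / 2) → Bool, ∑ x : Fin n → Fin d,
      if lossy Φ σ x k then ∏ i, cubeP d z b σ (x i) else 0 := by
  obtain ⟨S, hS⟩ : ∃ S, S = ∑ σ : Fin ((d - 1) / 2) → Bool, ∑ x : Fin n → Fin d,
      (if lossy Φ σ x k then ∏ i, cubeP d z b σ (x i) else 0) := ⟨_, rfl⟩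
  rw [← hS]
  have hS' : S = ∑ σ : Fin ((d - 1) / 2) → Bool, ∑ x : Fin n → Fin d,
      (if lossy Φ (flipAt k σ) x k then ∏ i, cubeP d z b (flipAt k σ) (x i) else 0) := by
    rw [hS]
    exact (Equiv.sum_comp (flipAt_invol k).toPerm (fun σ => ∑ x : Fin n → Fin d,
      (if lossy Φ σ x k then ∏ i, cubeP d z b σ (x i) else 0))).symm
  have h2 : 2 * S = S + S := by ring
  rw [h2]
  nth_rewrite 2 [hS']
  rw [hS, ← Finset.sum_add_distrib]
  have hc : (2 : ℝ) ^ ((d - 1) / 2) * (1 - n * b)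
      = ∑ σ : Fin ((d - 1) / 2) → Bool, (1 - n * b) := by
    simp [Finset.sum_const, -mul_sub, -Finset.sum_sub_distrib]
  rw [hc]
  apply Finset.sum_le_sum
  intro σ _
  refine (unseen_prob n d z hz b hb hb1 σ k).trans ?_
  rw [← Finset.sum_add_distrib]
  apply Finset.sum_le_sum
  intro x _
  have pos : ∀ τ, 0 ≤ ∏ i, cubeP d z b τ (x i) :=
    fun τ => Finset.prod_nonneg fun i _ => cubeP_nonneg d z b hb hbK τ _
  by_cases hu : unseen k x
  · rw [if_pos hu]
    have he : ∏ i, cubeP d z b (flipAt k σ) (x i) = ∏ i, cubeP d z b σ (x i) :=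
      Finset.prod_congr rfl fun i _ => cubeP_flip d z b σ k _ (hu i)
    rw [he]
    by_cases hl : lossy Φ σ x k
    · rw [if_pos hl]
      have := pos σ
      split_ifs <;> linarith
    · have hl' : lossy Φ (flipAt k σ) x k := by
        unfold lossy at hl ⊢
        simp only [flipAt, Function.update_self, Bool.not_not]
        exact (not_le.1 hl).le
      rw [if_neg hl, if_pos hl', zero_add]
  · rw [if_neg hu]
    have := pos σ
    have := pos (flipAt k σ)
    split_ifs <;> linarith

open Classical in
lemma chi_ge_s3 {n d : ℕ} (z : Fin d) (hz : z.1 = 0) (b : ℝ) (hb : 0 < b)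
    (Φ : (Fin n → Fin d) → (Fin d → ℝ)) (hΦ : ∀ x j, 0 ≤ Φ x j)
    (σ : Fin ((d - 1) / 2) → Bool) (x : Fin n → Fin d) :
    ENNReal.ofReal (4 / 5 * b * ((Finset.univ.filter (lossy Φ σ x)).card : ℝ))
      ≤ chiSqE (cubeP d z b σ) (Φ x) := by
  unfold chiSqE
  set f : Fin d → ℝ≥0∞ := fun j =>
    ENNReal.ofReal ((cubeP d z b σ j - Φ x j) ^ 2) / ENNReal.ofReal (Φ x j) with hf
  have h1 : ∑ k, (f (wAtom d k (σ k)) + f (wAtom d k (!σ k))) ≤ ∑ j, f j := by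
    have : ∀ k, f (wAtom d k (σ k)) + f (wAtom d k (!σ k)) = ∑ s : Bool, f (wAtom d k s) := by
      intro k; cases σ k <;> simp [add_comm]
    simp_rw [this]
    rw [← Fintype.sum_prod_type' (f := fun k s => f (wAtom d k s))]
    rw [← Finset.sum_image (f := f) (g := fun a : Fin ((d - 1) / 2) × Bool => wAtom d a.1 a.2)
      (s := Finset.univ)]
    · exact Finset.sum_le_sum_of_subset (Finset.subset_univ _)
    · rintro ⟨k, s⟩ _ ⟨l, t⟩ _ h
      exact Prod.ext_iff.2 (wAtom_inj.1 h)
  refine le_trans ?_ h1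
  refine le_trans ?_ (Finset.sum_le_sum_of_subset
    (Finset.subset_univ (Finset.univ.filter (lossy Φ σ x))))
  rw [ENNReal.ofReal_mul (by positivity), ENNReal.ofReal_natCast, mul_comm, ← nsmul_eq_mul,
    ← Finset.sum_const]
  apply Finset.sum_le_sum
  intro k hk
  have hl : lossy Φ σ x k := (Finset.mem_filter.1 hk).2
  simp only [hf, cubeP_w d z hz, if_true, if_neg (Bool.not_eq_self (σ k)).1]
  exact pair_ge b _ _ hb (hΦ _ _) hl

open Classical in
lemma small_L (n d : ℕ) (z : Fin d) (hz : z.1 = 0) (hdn : d ≤ n) (hd : 5000 ≤ d) (δ T : ℝ)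
    (hδu : δ < Real.exp (-1)) (hT : T ≤ 7 * d / n / 5000)
    (Φ : (Fin n → Fin d) → (Fin d → ℝ))
    (hΦ : ∀ x, (∀ j, 0 ≤ Φ x j) ∧ ∑ j, Φ x j = 1) :
    ∃ p : Fin d → ℝ, (∀ j, 0 ≤ p j) ∧ (∑ j, p j = 1) ∧
      δ ≤ sampleProb p {x | ENNReal.ofReal T ≤ chiSqE p (Φ x)} := by
  have hdR : (5000 : ℝ) ≤ d := by exact_mod_cast hd
  have hnR : (d : ℝ) ≤ n := by exact_mod_cast hdn
  have hn0 : (0 : ℝ) < n := by linarith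
  have he := Real.exp_neg_one_lt_d9
  set K : ℕ := (d - 1) / 2 with hK
  have hK1 : (d : ℝ) - 2 ≤ 2 * K := by
    have : d ≤ 2 * K + 2 := by omega
    have : (d : ℝ) ≤ 2 * K + 2 := by exact_mod_cast this
    linarith
  have hK2 : (K : ℝ) ≤ n := by
    have : K ≤ n := by omega
    exact_mod_cast this
  set b : ℝ := 1 / (10 * n) with hbdef
  have hnb : n * b = 1 / 10 := by rw [hbdef]; field_simp
  have hb : 0 < b := by positivity
  have hb1 : b ≤ 1 := by nlinarith
  have hbK : b * K ≤ 1 := by nlinarith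
  by_contra hcon
  push Not at hcon
  have hlt : ∀ σ, sampleProb (cubeP d z b σ)
      {x | ENNReal.ofReal T ≤ chiSqE (cubeP d z b σ) (Φ x)} ≤ 37 / 100 := fun σ =>
    le_of_lt ((hcon _ (cubeP_nonneg d z b hb.le hbK σ) (cubeP_sum d z b σ)).trans
      (hδu.trans (he.trans (by norm_num))))
  -- lower bound
  have low : (K : ℝ) * (2 ^ K * (9 / 10)) ≤ 2 * ∑ σ : Fin K → Bool, ∑ x : Fin n → Fin d,
      (∏ i, cubeP d z b σ (x i)) * ((Finset.univ.filter (lossy Φ σ x)).card : ℝ) := by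
    have h1 : ∀ k : Fin K, (2 : ℝ) ^ K * (9 / 10) ≤ 2 * ∑ σ : Fin K → Bool, ∑ x : Fin n → Fin d,
        if lossy Φ σ x k then ∏ i, cubeP d z b σ (x i) else 0 := by
      intro k
      have := half_lossy z hz b hb.le hb1 hbK Φ k
      rw [hnb] at this
      norm_num at this ⊢
      exact this
    have h2 := Finset.sum_le_sum (s := Finset.univ) (fun k _ => h1 k)
    rw [Finset.sum_const, nsmul_eq_mul, Finset.card_univ, Fintype.card_fin, ← Finset.mul_sum] at h2
    refine h2.trans (le_of_eq ?_)
    congr 1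
    rw [Finset.sum_comm]
    apply Finset.sum_congr rfl; intro σ _
    rw [Finset.sum_comm]
    apply Finset.sum_congr rfl; intro x _
    rw [← Finset.sum_filter, Finset.sum_const, nsmul_eq_mul, mul_comm]
  have up : ∀ σ : Fin K → Bool, ∑ x : Fin n → Fin d,
      (∏ i, cubeP d z b σ (x i)) * ((Finset.univ.filter (lossy Φ σ x)).card : ℝ)
      ≤ 43 / 100 * K := by
    intro σ
    set E := {x | ENNReal.ofReal T ≤ chiSqE (cubeP d z b σ) (Φ x)} with hE
    have htot : ∑ x : Fin n → Fin d, ∏ i, cubeP d z b σ (x i) = 1 := by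
      have := Finset.prod_univ_sum (fun _ : Fin n => (Finset.univ : Finset (Fin d)))
        (fun _ j => cubeP d z b σ j)
      rw [cubeP_sum] at this
      simpa using this.symm
    have hpt : ∀ x : Fin n → Fin d,
        (∏ i, cubeP d z b σ (x i)) * ((Finset.univ.filter (lossy Φ σ x)).card : ℝ)
        ≤ K * Set.indicator E (fun y => ∏ i, cubeP d z b σ (y i)) x
          + 6 / 100 * K * ∏ i, cubeP d z b σ (x i) := by
      intro x
      have pos : 0 ≤ ∏ i, cubeP d z b σ (x i) :=
        Finset.prod_nonneg fun i _ => cubeP_nonneg d z b hb.le hbK σ _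
      have hFK : ((Finset.univ.filter (lossy Φ σ x)).card : ℝ) ≤ K := by
        have := Finset.card_filter_le (Finset.univ) (lossy Φ σ x)
        rw [Finset.card_univ, Fintype.card_fin] at this
        exact_mod_cast this
      set F := ((Finset.univ.filter (lossy Φ σ x)).card : ℝ) with hF
      have hK0 : (0 : ℝ) ≤ K := by positivity
      by_cases hx : x ∈ E
      · rw [Set.indicator_of_mem hx]
        have := mul_le_mul_of_nonneg_left hFK pos
        have : 0 ≤ 6 / 100 * K * ∏ i, cubeP d z b σ (x i) := by positivity
        linarith
      · rw [Set.indicator_of_notMem hx]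
        have hF6 : F ≤ 6 / 100 * K := by
          by_contra hc
          push Not at hc
          apply hx
          refine le_trans (ENNReal.ofReal_le_ofReal ?_) (chi_ge_s3 z hz b hb Φ (fun x => (hΦ x).1) σ x)
          rw [← hF]
          refine hT.trans ?_
          rw [hbdef]
          have : 7 * (d : ℝ) / 5000 ≤ 4 / 50 * F := by linarith
          calc 7 * (d : ℝ) / n / 5000 = (7 * (d : ℝ) / 5000) / n := by ring
            _ ≤ (4 / 50 * F) / n := by gcongr
            _ = _ := by field_simp; ring
        have := mul_le_mul_of_nonneg_left hF6 pos
        linarith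
    have hsum := Finset.sum_le_sum (s := Finset.univ) (fun x _ => hpt x)
    rw [Finset.sum_add_distrib, ← Finset.mul_sum, ← Finset.mul_sum, htot] at hsum
    have h37 := hlt σ
    unfold sampleProb at h37
    have : (K : ℝ) * ∑ x : Fin n → Fin d, Set.indicator E (fun y => ∏ i, cubeP d z b σ (y i)) x
        ≤ K * (37 / 100) := mul_le_mul_of_nonneg_left h37 (by positivity)
    linarith
  have h3 := Finset.sum_le_sum (s := Finset.univ) (fun σ _ => up σ)
  rw [Finset.sum_const, nsmul_eq_mul] at h3
  have hc : ((Finset.univ : Finset (Fin K → Bool)).card : ℝ) = 2 ^ K := by simp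
  rw [hc] at h3
  have hpow : (0 : ℝ) < 2 ^ K := by positivity
  have hKpos : (0 : ℝ) < K := by linarith
  have : (0 : ℝ) < 2 ^ K * K := by positivity
  nlinarith

theorem minimax_lower_bound (n d : ℕ) (hdn : d ≤ n) (hd : 5000 ≤ d)
    (δ : ℝ) (hδl : Real.exp (-(n : ℝ)) < δ) (hδu : δ < Real.exp (-1))
    (Φ : (Fin n → Fin d) → (Fin d → ℝ))
    (hΦ : ∀ x, (∀ j, 0 ≤ Φ x j) ∧ ∑ j, Φ x j = 1) :
    ∃ p : Fin d → ℝ, (∀ j, 0 ≤ p j) ∧ (∑ j, p j = 1) ∧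
      δ ≤ sampleProb p {x |
        ENNReal.ofReal ((1 / 5000) *
          ((((d : ℝ) + Real.sqrt d * Real.log (1 / δ)) / n)
            + (d : ℝ) * Real.log (1 / δ) ^ 2 / n ^ 2)) ≤ chiSqE p (Φ x)} := by
  have hδ0 : 0 < δ := (Real.exp_pos _).trans hδl
  have hdR : (5000 : ℝ) ≤ d := by exact_mod_cast hd
  have hnR : (d : ℝ) ≤ n := by exact_mod_cast hdn
  have hn0 : (0 : ℝ) < n := by linarith
  have hL1 : 1 < Real.log (1 / δ) := by
    rw [one_div, Real.log_inv]
    have := (Real.log_lt_iff_lt_exp hδ0).2 hδu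
    linarith
  have hLn : Real.log (1 / δ) < n := by
    rw [one_div, Real.log_inv]
    have := (Real.lt_log_iff_exp_lt hδ0).2 hδl
    linarith
  have hδL : δ = Real.exp (-Real.log (1 / δ)) := by
    rw [one_div, Real.log_inv, neg_neg, Real.exp_log hδ0]
  set L := Real.log (1 / δ) with hL
  set s := Real.sqrt d with hs
  have hss : s * s = d := Real.mul_self_sqrt (by positivity)
  have hs70 : 70 ≤ s := by
    apply Real.le_sqrt_of_sq_le; linarith
  let z : Fin d := ⟨0, by omega⟩
  by_cases hc : L ≤ 2 * s
  · apply small_L n d z rfl hdn hd δ _ hδu _ Φ hΦ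
    have h1 : s * L ≤ 2 * d := by nlinarith
    have h2 : L ^ 2 ≤ 4 * n := by nlinarith
    have h3 : (d : ℝ) * L ^ 2 / n ^ 2 ≤ 4 * d / n := by
      rw [div_le_div_iff₀ (by positivity) hn0]
      have : (d : ℝ) * n * L ^ 2 ≤ d * n * (4 * n) := by gcongr
      nlinarith
    have h4 : ((d : ℝ) + s * L) / n ≤ 3 * d / n := by gcongr; linarith
    calc _ ≤ (1 / 5000 : ℝ) * (3 * d / n + 4 * d / n) := by gcongr
      _ = _ := by ring
  · push Not at hc
    have hε0 : 0 < L / n / 2 := by positivity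
    have hLn1 : L / n ≤ 1 := by rw [div_le_one hn0]; exact hLn.le
    refine big_L n d z hd δ _ (L / n / 2) hε0 (by linarith) ?_ ?_ ?_ (by positivity) ?_ Φ hΦ
    · have h1 : Real.exp (-(L / n)) ≤ 1 - L / n / 2 := by
        rw [Real.exp_neg]
        have := Real.add_one_le_exp (L / n)
        rw [inv_le_iff_one_le_mul₀ (Real.exp_pos _)]
        nlinarith
      calc δ = Real.exp (-(L / n)) ^ n := by
            rw [← Real.exp_nat_mul, hδL]; congr 1; field_simp
        _ ≤ _ := by gcongr
    · have := Real.exp_neg_one_lt_d9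
      linarith
    · have h1 : ((d : ℝ) + s * L) / n ≤ (3 / 2 * s * L) / n := by
        gcongr; nlinarith
      calc _ ≤ (1 / 5000 : ℝ) * ((3 / 2 * s * L) / n + (d : ℝ) * L ^ 2 / n ^ 2) := by gcongr
        _ = _ := by field_simp; ring
    · by_cases h : s * (L / n / 2) < 1
      · exact Or.inr h
      · left
        push Not at h
        calc (1 : ℝ) ≤ (s * (L / n / 2)) ^ 2 := by nlinarith
          _ = _ := by rw [← hss]; ring
end

section
/- Let n ≥ d ≥ 2 be integers and δ ∈ (e^{-n}, e^{-1}). There exists a set F ⊂ Δ_d of d distributions, each supported on at most 2 points, such that for any estimator Φ : {1,…,d}^n → Δ_d there exists P ∈ F for which, writing P̂_n = Φ(X_1, …, X_n) for an i.i.d. sample from P, the probability that χ²(P, P̂_n) ≥ 0.15 · ( √d·log(1/δ)/n + d·log²(1/δ)/n² ) is at least δ. -/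
open Finset
open scoped ENNReal

lemma chi_aux {d : ℕ} (p q : Fin d → ℝ) (T : ℝ) (hq : ∀ j, 0 ≤ q j)
    (hps : ∑ j, p j = 1) (hqs : ∑ j, q j = 1)
    (h : ¬ ENNReal.ofReal T ≤ chiSqE p q) :
    (∀ j, q j = 0 → p j = 0) ∧ ∑ j, p j ^ 2 / q j < 1 + T := by
  have hz : ∀ j, q j = 0 → p j = 0 := by
    intro j hj
    by_contra hp
    apply h
    have h1 : ENNReal.ofReal ((p j - q j) ^ 2) / ENNReal.ofReal (q j) = ⊤ := by
      rw [hj]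
      simp only [sub_zero, ENNReal.ofReal_zero]
      apply ENNReal.div_zero
      have : 0 < p j ^ 2 := by positivity
      simpa using hp
    have h2 : chiSqE p q = ⊤ := by
      unfold chiSqE
      exact ENNReal.sum_eq_top.2 ⟨j, Finset.mem_univ _, h1⟩
    rw [h2]; exact le_top
  refine ⟨hz, ?_⟩
  have hE : chiSqE p q = ENNReal.ofReal (∑ j, (p j - q j) ^ 2 / q j) := by
    unfold chiSqE
    rw [ENNReal.ofReal_sum_of_nonneg]
    · apply Finset.sum_congr rfl
      intro j _
      rcases (hq j).eq_or_lt with h0 | h0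
      · simp [← h0, hz j h0.symm]
      · rw [ENNReal.ofReal_div_of_pos h0]
    · intro j _
      exact div_nonneg (sq_nonneg _) (hq j)
  have hlt : ∑ j, (p j - q j) ^ 2 / q j < T := by
    by_contra hc
    push Not at hc
    apply h
    rw [hE]
    exact ENNReal.ofReal_le_ofReal hc
  have hs : ∑ j, (p j - q j) ^ 2 / q j = ∑ j, (p j ^ 2 / q j - 2 * p j + q j) := by
    apply Finset.sum_congr rfl
    intro j _
    rcases (hq j).eq_or_lt with h0 | h0
    · simp [← h0, hz j h0.symm]
    · field_simp
      ring
  rw [Finset.sum_add_distrib, Finset.sum_sub_distrib, ← Finset.mul_sum, hps, hqs] at hs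
  linarith

lemma scheme (n d : ℕ) (hd : 2 ≤ d) (a T δ : ℝ) (ha0 : 0 < a) (ha1 : a < 1)
    (hδ : δ ≤ (1 - a) ^ n)
    (H : ∀ u, 0 ≤ u → u ≤ T →
      u * (1 + T) ≤ u * (1 + u) * (1 - a) ^ 2 + ((d : ℝ) - 1) * a ^ 2 * (1 + u)) :
    ∃ F : Finset (Fin d → ℝ), F.card = d ∧
      (∀ q ∈ F, (∀ j, 0 ≤ q j) ∧ (∑ j, q j = 1) ∧
        (Finset.univ.filter (fun j => q j ≠ 0)).card ≤ 2) ∧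
      ∀ Φ : (Fin n → Fin d) → (Fin d → ℝ),
        (∀ x, (∀ j, 0 ≤ Φ x j) ∧ ∑ j, Φ x j = 1) →
        ∃ p ∈ F, δ ≤ sampleProb p {x | ENNReal.ofReal T ≤ chiSqE p (Φ x)} := by
  classical
  let z : Fin d := ⟨0, by omega⟩
  let P : Fin d → Fin d → ℝ := fun j k => (if k = z then 1 - a else 0) + (if k = j then a else 0)
  have hP0 : ∀ j k, 0 ≤ P j k := by
    intro j k
    simp only [P]
    split_ifs <;> linarith
  have hPs : ∀ j, ∑ k, P j k = 1 := by
    intro j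
    simp [P, Finset.sum_add_distrib]
  have hinj : Function.Injective P := by
    intro i j hij
    by_contra hne
    have := congrFun hij i
    simp [P, hne] at this
    exact ha0.ne' this
  refine ⟨Finset.univ.image P, ?_, ?_, ?_⟩
  · rw [Finset.card_image_of_injective _ hinj]; simp
  · intro q hq
    obtain ⟨j, _, rfl⟩ := Finset.mem_image.1 hq
    refine ⟨hP0 j, hPs j, ?_⟩
    refine le_trans (Finset.card_le_card (t := {z, j}) ?_) Finset.card_le_two
    intro k hk
    by_contra hc
    simp at hc
    simp [P, hc.1, hc.2] at hk
  · intro Φ hΦ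
    by_contra hcon
    push Not at hcon
    let x0 : Fin n → Fin d := fun _ => z
    have hx : ∀ j, ¬ ENNReal.ofReal T ≤ chiSqE (P j) (Φ x0) := by
      intro j hj
      have h1 := hcon (P j) (Finset.mem_image_of_mem _ (Finset.mem_univ _))
      have h2 : δ ≤ sampleProb (P j) {x | ENNReal.ofReal T ≤ chiSqE (P j) (Φ x)} := by
        unfold sampleProb
        refine le_trans ?_ (Finset.single_le_sum (f := fun x => Set.indicator
          {x | ENNReal.ofReal T ≤ chiSqE (P j) (Φ x)} (fun y : Fin n → Fin d => ∏ i, P j (y i)) x)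
          (fun x _ => Set.indicator_nonneg (fun y _ => Finset.prod_nonneg (fun i _ => hP0 _ _)) x)
          (Finset.mem_univ x0))
        have hm : x0 ∈ {x | ENNReal.ofReal T ≤ chiSqE (P j) (Φ x)} := hj
        simp only [Set.indicator_of_mem hm]
        refine hδ.trans ?_
        simp only [x0, Finset.prod_const, Finset.card_univ, Fintype.card_fin]
        apply pow_le_pow_left₀ (by linarith)
        simp only [P, if_true]
        split_ifs <;> linarith
      linarith
    obtain ⟨hq0, hqs⟩ := hΦ x0
    generalize Φ x0 = q at hq0 hqs hx
    have hc := fun j => chi_aux (P j) q T hq0 (hPs j) hqs (hx j)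
    have hPzz : P z z = 1 := by simp [P]
    have hqz : 0 < q z := by
      rcases (hq0 z).eq_or_lt with h | h
      · have := (hc z).1 z h.symm
        linarith
      · exact h
    have h1 : 1 / q z < 1 + T := by
      have := Finset.single_le_sum (f := fun k => P z k ^ 2 / q k)
        (fun k _ => div_nonneg (sq_nonneg _) (hq0 k)) (Finset.mem_univ z)
      simp only [hPzz] at this
      have h2 := (hc z).2
      norm_num at this ⊢
      linarith
    have h2 : ∀ j ∈ Finset.univ.erase z, a ^ 2 < q j * (1 + T - (1 - a) ^ 2 / q z) := by
      intro j hj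
      have hjz : j ≠ z := Finset.ne_of_mem_erase hj
      have e1 : P j z = 1 - a := by simp [P, hjz.symm]
      have e2 : P j j = a := by simp [P, hjz]
      have hqj : 0 < q j := by
        rcases (hq0 j).eq_or_lt with h | h
        · have := (hc j).1 j h.symm
          linarith
        · exact h
      have h3 := Finset.sum_le_sum_of_subset_of_nonneg (f := fun k => P j k ^ 2 / q k)
        (Finset.subset_univ {z, j}) (fun k _ _ => div_nonneg (sq_nonneg _) (hq0 k))
      rw [Finset.sum_pair hjz.symm, e1, e2] at h3
      have h4 := (hc j).2
      have h5 : a ^ 2 / q j < 1 + T - (1 - a) ^ 2 / q z := by linarith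
      rw [div_lt_iff₀ hqj] at h5
      linarith
    have hne : (Finset.univ.erase z).Nonempty := by
      refine ⟨⟨1, by omega⟩, ?_⟩
      simp [z]
    have h3 := Finset.sum_lt_sum_of_nonempty hne h2
    rw [← Finset.sum_mul, Finset.sum_const, Finset.card_erase_of_mem (Finset.mem_univ _),
      Finset.card_univ, Fintype.card_fin, nsmul_eq_mul, Nat.cast_sub (by omega)] at h3
    have h4 : ∑ j ∈ Finset.univ.erase z, q j = 1 - q z := by
      rw [← hqs, ← Finset.add_sum_erase _ _ (Finset.mem_univ z)]; ring
    rw [h4] at h3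
    have hqz1 : q z ≤ 1 := by
      rw [← hqs]; exact Finset.single_le_sum (fun k _ => hq0 k) (Finset.mem_univ z)
    have h5 := H (1 / q z - 1) (by
      rw [sub_nonneg, le_div_iff₀ hqz]; linarith) (by linarith)
    have h6 : (1 / q z - 1) = (1 - q z) * (1 / q z) := by field_simp
    have h7 : 0 < 1 / q z := by positivity
    have h8 := mul_lt_mul_of_pos_right h3 h7
    have h9 : (1 - q z) * (1 + T - (1 - a) ^ 2 / q z) * (1 / q z) =
      (1 / q z - 1) * (1 + T) - (1 / q z - 1) * (1 + (1 / q z - 1)) * (1 - a) ^ 2 := by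
      field_simp
      ring
    rw [h9] at h8
    push_cast at h8
    have h10 : (1 + (1 / q z - 1)) = 1 / q z := by ring
    rw [h10] at h5 h8
    linarith

/-- large `D` case -/
lemma core_large (y a T u : ℝ) (ha1 : a < 1) (hu : 0 ≤ u)
    (hT : 1 + T ≤ ((1 - a) + a * y) ^ 2) :
    u * (1 + T) ≤ u * (1 + u) * (1 - a) ^ 2 + y ^ 2 * a ^ 2 * (1 + u) := by
  have := mul_le_mul_of_nonneg_left hT hu
  nlinarith [sq_nonneg (u * (1 - a) - a * y)]

/-- small `D` case -/
lemma core_small (D a T u : ℝ) (ha0 : 0 < a) (ha1 : a < 1) (hu : 0 ≤ u) (huT : u ≤ T)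
    (hT : T * (2 - a) ≤ D * a)
    (hD : 0 ≤ 1 - (1 - a) ^ 2 + T - 2 * (1 - a) ^ 2 * T - D * a ^ 2) :
    u * (1 + T) ≤ u * (1 + u) * (1 - a) ^ 2 + D * a ^ 2 * (1 + u) := by
  have h1 : 0 ≤ (T - u) * (1 - (1 - a) ^ 2 + T - (1 - a) ^ 2 * (u + T) - D * a ^ 2) := by
    apply mul_nonneg (by linarith)
    nlinarith [mul_nonneg (sq_nonneg (1 - a)) (sub_nonneg.2 huT)]
  have h2 : 0 ≤ (1 + T) * a * (D * a - T * (2 - a)) := by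
    apply mul_nonneg _ (by linarith)
    apply mul_nonneg _ ha0.le
    linarith
  nlinarith

lemma exp_chord (t t1 k : ℝ) (h0 : 0 ≤ t) (h1 : t ≤ t1) (ht : 0 < t1)
    (hk : Real.exp (-t1) ≤ 1 - k * t1) : k * t ≤ 1 - Real.exp (-t) := by
  have := convexOn_exp.2 (Set.mem_univ (0:ℝ)) (Set.mem_univ (-t1))
    (show 0 ≤ 1 - t / t1 by rw [sub_nonneg, div_le_one ht]; exact h1)
    (show 0 ≤ t / t1 by positivity) (by ring)
  simp only [smul_eq_mul, mul_zero, zero_add, Real.exp_zero, mul_one] at this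
  have e : t / t1 * -t1 = -t := by field_simp
  rw [e] at this
  have h3 := mul_le_mul_of_nonneg_left hk (show 0 ≤ t / t1 by positivity)
  have h4 : t / t1 * (1 - k * t1) = t / t1 - k * t := by field_simp
  linarith

lemma exp_neg_le (x B : ℝ) (hx : 0 ≤ x) (hB : 1 ≤ B * (1 + x + x ^ 2 / 2 + x ^ 3 / 6 + x ^ 4 / 24))
    (hB0 : 0 ≤ B) :
    Real.exp (-x) ≤ B := by
  have h := Real.sum_le_exp_of_nonneg hx 5
  norm_num [Finset.sum_range_succ, Nat.factorial] at h
  rw [Real.exp_neg]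
  rw [inv_le_iff_one_le_mul₀ (Real.exp_pos x)]
  nlinarith

lemma exp_neg_le2 (x B : ℝ) (hx : 0 ≤ x) (B' : ℝ) (hB' : 0 ≤ B') (h2 : B' ^ 2 ≤ B)
    (hB : 1 ≤ B' * (1 + (x/2) + (x/2) ^ 2 / 2 + (x/2) ^ 3 / 6 + (x/2) ^ 4 / 24)) :
    Real.exp (-x) ≤ B := by
  have h := exp_neg_le (x / 2) B' (by positivity) hB hB'
  have e : Real.exp (-x) = Real.exp (-(x/2)) ^ 2 := by
    rw [← Real.exp_nat_mul]; congr 1; push_cast; ring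
  rw [e]
  exact le_trans (pow_le_pow_left₀ (Real.exp_pos _).le h 2) h2

lemma core_all (d : ℕ) (hd : 2 ≤ d) (t T : ℝ) (ht0 : 0 < t) (ht1 : t < 1)
    (hT : T = 0.15 * (Real.sqrt d * t + d * t ^ 2)) (h2 : d = 2 → t ≤ 0.85)
    (u : ℝ) (hu : 0 ≤ u) (huT : u ≤ T) :
    u * (1 + T) ≤ u * (1 + u) * (1 - (1 - Real.exp (-t))) ^ 2
      + ((d : ℝ) - 1) * (1 - Real.exp (-t)) ^ 2 * (1 + u) := by
  have ha0 : 0 < 1 - Real.exp (-t) := by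
    have : Real.exp (-t) < 1 := by rw [Real.exp_lt_one_iff]; linarith
    linarith
  have ha1 : 1 - Real.exp (-t) < 1 := by linarith [Real.exp_pos (-t)]
  have hk : 0.63 * t ≤ 1 - Real.exp (-t) :=
    exp_chord t 1 0.63 ht0.le ht1.le one_pos
      (exp_neg_le 1 _ (by norm_num) (by norm_num) (by norm_num))
  have hup : 1 - Real.exp (-t) ≤ 0.64 := by
    have h1 : Real.exp (-1) ≤ Real.exp (-t) := Real.exp_le_exp.2 (by linarith)
    have h2 := Real.exp_neg_one_gt_d9
    linarith
  have hk2 : t ≤ 0.85 → 0.671 * t ≤ 1 - Real.exp (-t) := fun h =>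
    exp_chord t 0.85 0.671 ht0.le h (by norm_num)
      (exp_neg_le 0.85 _ (by norm_num) (by norm_num) (by norm_num))
  generalize 1 - Real.exp (-t) = a at *
  have hcase : d = 2 ∨ d = 3 ∨ 4 ≤ d := by omega
  rcases hcase with h | h | h
  · have ht := h2 h
    have hk := hk2 ht
    subst h
    have hs : Real.sqrt ((2:ℕ):ℝ) ≤ 1.4143 := by
      rw [Real.sqrt_le_left (by norm_num)]; norm_num
    have hTb : T ≤ t * (0.21215 + 0.3 * t) := by
      rw [hT]; push_cast at hs ⊢; nlinarith
    have hT0 : 0 ≤ T := hu.trans huT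
    have hTV : T * (2 - a) ≤ ((2:ℕ) - 1 : ℝ) * a := by
      have e1 : T * (2 - a) ≤ T * (2 - 0.671 * t) := by gcongr
      have e2 : T * (2 - 0.671 * t) ≤ t * (0.21215 + 0.3 * t) * (2 - 0.671 * t) := by
        apply mul_le_mul_of_nonneg_right hTb; linarith
      have e3 : (0.21215 + 0.3 * t) * (2 - 0.671 * t) ≤ 0.671 := by nlinarith
      have e4 := mul_le_mul_of_nonneg_left e3 ht0.le
      push_cast
      linarith
    apply core_small _ a T u ha0 ha1 hu huT hTV
    push_cast at hTV ⊢
    rcases le_total (2 * (1 - a) ^ 2) 1 with hc | hc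
    · nlinarith [mul_nonneg hT0 (sub_nonneg.2 hc), mul_pos ha0 (sub_pos.2 ha1)]
    · have hTa : T ≤ a := by nlinarith
      have := mul_le_mul_of_nonneg_right hTa (sub_nonneg.2 hc)
      nlinarith [mul_pos ha0 (sub_pos.2 ha1), mul_pos ha0 ha0, mul_pos (mul_pos ha0 ha0) (sub_pos.2 ha1)]
  · subst h
    have hs : Real.sqrt ((3:ℕ):ℝ) ≤ 1.7321 := by
      rw [Real.sqrt_le_left (by norm_num)]; norm_num
    have hTb : T ≤ t * (0.26 + 0.45 * t) := by
      rw [hT]; push_cast at hs ⊢; nlinarith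
    have hT0 : 0 ≤ T := hu.trans huT
    have hTV : T * (2 - a) ≤ ((3:ℕ) - 1 : ℝ) * a := by
      have e1 : T * (2 - a) ≤ T * (2 - 0.63 * t) := by gcongr
      have e2 : T * (2 - 0.63 * t) ≤ t * (0.26 + 0.45 * t) * (2 - 0.63 * t) := by
        apply mul_le_mul_of_nonneg_right hTb; linarith
      have e3 : (0.26 + 0.45 * t) * (2 - 0.63 * t) ≤ 2 * 0.63 := by nlinarith
      have e4 := mul_le_mul_of_nonneg_left e3 ht0.le
      push_cast
      linarith
    apply core_small _ a T u ha0 ha1 hu huT hTV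
    push_cast at hTV ⊢
    rcases le_total (2 * (1 - a) ^ 2) 1 with hc | hc
    · nlinarith [mul_nonneg hT0 (sub_nonneg.2 hc), mul_pos ha0 (sub_pos.2 ha1)]
    · have h0 : 0 ≤ (2 - a) * (1 - (1 - a) ^ 2 + T - 2 * (1 - a) ^ 2 * T - (3 - 1) * a ^ 2) := by
        have := mul_le_mul_of_nonneg_right hTV (sub_nonneg.2 hc)
        have h3 : 0 ≤ a * (2 - a ^ 2) := mul_nonneg ha0.le (by nlinarith)
        nlinarith
      exact nonneg_of_mul_nonneg_right h0 (by linarith)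
  · have hd4 : (4:ℝ) ≤ d := by exact_mod_cast h
    obtain ⟨y, hy⟩ : ∃ y, y = Real.sqrt ((d:ℝ) - 1) := ⟨_, rfl⟩
    have hy2 : y ^ 2 = (d:ℝ) - 1 := by rw [hy, Real.sq_sqrt]; linarith
    have hy0 : 0 ≤ y := hy ▸ Real.sqrt_nonneg _
    have hy1 : 1.732 ≤ y := by nlinarith
    have hs : Real.sqrt d ≤ 1.155 * y := by
      rw [Real.sqrt_le_left (by positivity)]; nlinarith
    rw [← hy2]
    apply core_large y a T u ha1 hu
    have hTb : T ≤ 0.15 * (1.155 * y * t + (y ^ 2 + 1) * t ^ 2) := by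
      rw [hT, hy2]
      have := mul_le_mul_of_nonneg_right hs ht0.le
      linarith
    have e : ((1 - a) + a * y) ^ 2 = 1 + 2 * (a * (y - 1)) + (a * (y - 1)) ^ 2 := by ring
    have f : 0.63 * t * (y - 1) ≤ a * (y - 1) := mul_le_mul_of_nonneg_right hk (by linarith)
    have f0 : 0 ≤ 0.63 * t * (y - 1) := mul_nonneg (by linarith) (by linarith)
    have f2 := pow_le_pow_left₀ f0 f 2
    rw [e]
    have g1 : 0 ≤ 1.26 * (y - 1) - 0.17325 * y := by linarith
    have g2 : 0 ≤ 1.26 * (y - 1) - 0.17325 * y + (0.3969 * (y - 1) ^ 2 - 0.15 * (y ^ 2 + 1)) := by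
      nlinarith
    have g3 := mul_nonneg g1 (mul_nonneg ht0.le (sub_nonneg.2 ht1.le))
    have g4 := mul_nonneg g2 (sq_nonneg t)
    nlinarith

noncomputable def symS (p1 p2 : Fin 2 → ℝ) (n : ℕ) : ℝ :=
  ∑ x : Fin n → Fin 2, min (∏ i, p1 (x i)) (∏ i, p2 (x i))

lemma sum_cons {n : ℕ} (f : (Fin (n+1) → Fin 2) → ℝ) :
    ∑ x, f x = ∑ y : Fin 2, ∑ x : Fin n → Fin 2, f (Fin.cons y x) := by
  rw [← (Fin.consEquiv (fun _ : Fin (n+1) => Fin 2)).sum_comp, Fintype.sum_prod_type]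
  rfl

lemma min_mul_aux (u v A B : ℝ) (hu : 0 ≤ u) (hv : 0 ≤ v) (hA : 0 ≤ A) (hB : 0 ≤ B) :
    min u v * min A B ≤ min (u * A) (v * B) :=
  le_min (mul_le_mul (min_le_left _ _) (min_le_left _ _) (le_min hA hB) hu)
    (mul_le_mul (min_le_right _ _) (min_le_right _ _) (le_min hA hB) hv)

lemma symS_zero (p1 p2 : Fin 2 → ℝ) : symS p1 p2 0 = 1 := by
  simp [symS]

lemma symS_two (b : ℝ) (hb0 : 0 ≤ b) (hb : b ≤ 1/2) (n : ℕ) :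
    2 * b * symS ![1-b, b] ![b, 1-b] n ≤ symS ![1-b, b] ![b, 1-b] (n+2) := by
  have hp1 : ∀ i, 0 ≤ (![1-b, b] : Fin 2 → ℝ) i := by
    intro i; fin_cases i <;> simp <;> linarith
  have hp2 : ∀ i, 0 ≤ (![b, 1-b] : Fin 2 → ℝ) i := by
    intro i; fin_cases i <;> simp <;> linarith
  unfold symS
  rw [sum_cons]
  simp_rw [sum_cons]
  simp only [Fin.prod_univ_succ, Fin.cons_zero, Fin.cons_succ, ← mul_assoc]
  have h : ∀ y y' : Fin 2, min ((![1-b, b] : Fin 2 → ℝ) y * (![1-b, b] : Fin 2 → ℝ) y')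
      ((![b, 1-b] : Fin 2 → ℝ) y * (![b, 1-b] : Fin 2 → ℝ) y') *
      (∑ x : Fin n → Fin 2, min (∏ i, (![1-b, b] : Fin 2 → ℝ) (x i)) (∏ i, (![b, 1-b] : Fin 2 → ℝ) (x i)))
      ≤ ∑ x : Fin n → Fin 2, min ((![1-b, b] : Fin 2 → ℝ) y * (![1-b, b] : Fin 2 → ℝ) y' * ∏ i, (![1-b, b] : Fin 2 → ℝ) (x i)) ((![b, 1-b] : Fin 2 → ℝ) y * (![b, 1-b] : Fin 2 → ℝ) y' * ∏ i, (![b, 1-b] : Fin 2 → ℝ) (x i)) := by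
    intro y y'
    rw [Finset.mul_sum]
    apply Finset.sum_le_sum
    intro x _
    exact min_mul_aux _ _ _ _ (mul_nonneg (hp1 _) (hp1 _)) (mul_nonneg (hp2 _) (hp2 _))
      (Finset.prod_nonneg fun i _ => hp1 _) (Finset.prod_nonneg fun i _ => hp2 _)
  refine le_trans ?_ (Finset.sum_le_sum fun y _ => Finset.sum_le_sum fun y' _ => h y y')
  simp_rw [← Finset.sum_mul]
  apply mul_le_mul_of_nonneg_right
  · simp only [Fin.sum_univ_two, Matrix.cons_val_zero, Matrix.cons_val_one]
    rw [min_eq_right (by nlinarith : b * b ≤ (1-b)*(1-b)),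
      min_eq_left (by nlinarith : b * b ≤ (1-b)*(1-b)),
      min_eq_left (by nlinarith : (1-b) * b ≤ b*(1-b)),
      min_eq_left (by nlinarith : b * (1-b) ≤ (1-b)*b)]
    nlinarith
  · exact Finset.sum_nonneg fun x _ => le_min (Finset.prod_nonneg fun i _ => hp1 _)
      (Finset.prod_nonneg fun i _ => hp2 _)

lemma symS_three (b : ℝ) (hb0 : 0 ≤ b) (hb : b ≤ 1/2) :
    2 * (b ^ 2 * (3 - 2 * b)) ≤ symS ![1-b, b] ![b, 1-b] 3 := by
  unfold symS
  simp_rw [sum_cons]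
  simp only [Fin.prod_univ_succ, Fin.cons_zero, Fin.cons_succ, Fin.sum_univ_two,
    Matrix.cons_val_zero, Matrix.cons_val_one]
  simp only [Finset.univ_unique, Finset.sum_const,
    Finset.card_singleton, one_smul, Finset.univ_eq_empty, Finset.prod_empty, mul_one]
  have k1 : b * b ≤ (1-b)*(1-b) := by nlinarith
  have k2 : b * (b * b) ≤ (1-b)*((1-b)*(1-b)) := mul_le_mul (by linarith) k1 (by positivity) (by linarith)
  have k3 : b * (b * (1 - b)) ≤ (1-b)*(b*(1-b)) := mul_le_mul_of_nonneg_right (by linarith) (mul_nonneg hb0 (by linarith))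
  have g : ∀ x y c : ℝ, c ≤ x → c ≤ y → c ≤ min x y := fun x y c h1 h2 => le_min h1 h2
  have a1 := g ((1-b)*((1-b)*(1-b))) (b*(b*b)) (b*(b*b)) (by nlinarith) (by nlinarith)
  have a2 := g ((1-b)*((1-b)*b)) (b*(b*(1-b))) (b*(b*(1-b))) (by nlinarith) (by nlinarith)
  have a3 := g ((1-b)*(b*(1-b))) (b*((1-b)*b)) (b*(b*(1-b))) (by nlinarith) (by nlinarith)
  have a4 := g ((1-b)*(b*b)) (b*((1-b)*(1-b))) (b*(b*(1-b))) (by nlinarith) (by nlinarith)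
  have a5 := g (b*((1-b)*(1-b))) ((1-b)*(b*b)) (b*(b*(1-b))) (by nlinarith) (by nlinarith)
  have a6 := g (b*((1-b)*b)) ((1-b)*(b*(1-b))) (b*(b*(1-b))) (by nlinarith) (by nlinarith)
  have a7 := g (b*(b*(1-b))) ((1-b)*((1-b)*b)) (b*(b*(1-b))) (by nlinarith) (by nlinarith)
  have a8 := g (b*(b*b)) ((1-b)*((1-b)*(1-b))) (b*(b*b)) (by nlinarith) (by nlinarith)
  have e : 2 * (b ^ 2 * (3 - 2 * b)) = 2 * (b*(b*b)) + 6 * (b*(b*(1-b))) := by ring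
  rw [e]
  linarith

lemma symS_ge (b r : ℝ) (hb0 : 0 ≤ b) (hb : b ≤ 1/2) (hr : 0 ≤ r) (h2 : r ^ 2 ≤ b)
    (h3 : r ^ 3 ≤ b ^ 2 * (3 - 2 * b)) (n : ℕ) (hn : 2 ≤ n) :
    2 * r ^ n ≤ symS ![1-b, b] ![b, 1-b] n := by
  induction n using Nat.strong_induction_on with
  | _ n ih =>
    rcases (by omega : n = 2 ∨ n = 3 ∨ 4 ≤ n) with h | h | h
    · subst h
      have := symS_two b hb0 hb 0
      rw [symS_zero] at this
      linarith
    · subst h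
      have := symS_three b hb0 hb
      linarith
    · obtain ⟨m, rfl⟩ : ∃ m, n = m + 2 := ⟨n - 2, by omega⟩
      have h1 := ih m (by omega) (by omega)
      have h4 := symS_two b hb0 hb m
      have h5 : 2 * r ^ (m + 2) ≤ 2 * b * (2 * r ^ m) := by
        have := mul_le_mul_of_nonneg_right h2 (pow_nonneg hr m)
        have : 0 ≤ b * r ^ m := by positivity
        rw [pow_add]
        nlinarith
      have h6 := mul_le_mul_of_nonneg_left h1 (show 0 ≤ 2 * b by linarith)
      linarith

lemma scheme2 (n : ℕ) (b T δ : ℝ) (hb0 : 0 ≤ b) (hb : b < 1/2)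
    (hT : T ≤ (1 - 2 * b) ^ 2) (hS : 2 * δ ≤ symS ![1-b, b] ![b, 1-b] n) :
    ∃ F : Finset (Fin 2 → ℝ), F.card = 2 ∧
      (∀ q ∈ F, (∀ j, 0 ≤ q j) ∧ (∑ j, q j = 1) ∧
        (Finset.univ.filter (fun j => q j ≠ 0)).card ≤ 2) ∧
      ∀ Φ : (Fin n → Fin 2) → (Fin 2 → ℝ),
        (∀ x, (∀ j, 0 ≤ Φ x j) ∧ ∑ j, Φ x j = 1) →
        ∃ p ∈ F, δ ≤ sampleProb p {x | ENNReal.ofReal T ≤ chiSqE p (Φ x)} := by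
  classical
  have hp1 : ∀ i, 0 ≤ (![1-b, b] : Fin 2 → ℝ) i := by
    intro i; fin_cases i <;> simp <;> linarith
  have hp2 : ∀ i, 0 ≤ (![b, 1-b] : Fin 2 → ℝ) i := by
    intro i; fin_cases i <;> simp <;> linarith
  have hs1 : ∑ i, (![1-b, b] : Fin 2 → ℝ) i = 1 := by simp [Fin.sum_univ_two]
  have hs2 : ∑ i, (![b, 1-b] : Fin 2 → ℝ) i = 1 := by simp [Fin.sum_univ_two]
  have hcard : ∀ q : Fin 2 → ℝ, (Finset.univ.filter (fun j => q j ≠ 0)).card ≤ 2 := by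
    intro q
    exact (Finset.card_le_univ _).trans (by simp)
  refine ⟨{![1-b, b], ![b, 1-b]}, ?_, ?_, ?_⟩
  · apply Finset.card_pair
    intro h
    have := congrFun h 0
    simp at this
    linarith
  · intro q hq
    simp only [Finset.mem_insert, Finset.mem_singleton] at hq
    rcases hq with rfl | rfl
    · exact ⟨hp1, hs1, hcard _⟩
    · exact ⟨hp2, hs2, hcard _⟩
  · intro Φ hΦ
    by_contra hcon
    push Not at hcon
    have c1 := hcon ![1-b, b] (by simp)
    have c2 := hcon ![b, 1-b] (by simp)
    have key : symS ![1-b, b] ![b, 1-b] n ≤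
        sampleProb ![1-b, b] {x | ENNReal.ofReal T ≤ chiSqE ![1-b, b] (Φ x)} +
        sampleProb ![b, 1-b] {x | ENNReal.ofReal T ≤ chiSqE ![b, 1-b] (Φ x)} := by
      unfold symS sampleProb
      rw [← Finset.sum_add_distrib]
      apply Finset.sum_le_sum
      intro x _
      have n1 : 0 ≤ ∏ i, (![1-b, b] : Fin 2 → ℝ) (x i) := Finset.prod_nonneg fun i _ => hp1 _
      have n2 : 0 ≤ ∏ i, (![b, 1-b] : Fin 2 → ℝ) (x i) := Finset.prod_nonneg fun i _ => hp2 _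
      simp only [Set.indicator_apply, Set.mem_setOf_eq]
      have m1 := min_le_left (∏ i, (![1-b, b] : Fin 2 → ℝ) (x i)) (∏ i, (![b, 1-b] : Fin 2 → ℝ) (x i))
      have m2 := min_le_right (∏ i, (![1-b, b] : Fin 2 → ℝ) (x i)) (∏ i, (![b, 1-b] : Fin 2 → ℝ) (x i))
      split_ifs with i1 i2 i2
      · linarith
      · linarith
      · linarith
      · exfalso
        obtain ⟨hq0, hqs⟩ := hΦ x
        generalize Φ x = q at hq0 hqs i1 i2
        obtain ⟨z1, r1⟩ := chi_aux _ q T hq0 hs1 hqs i1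
        obtain ⟨z2, r2⟩ := chi_aux _ q T hq0 hs2 hqs i2
        have q0 : 0 < q 0 := by
          rcases (hq0 0).eq_or_lt with h | h
          · have := z1 0 h.symm
            simp at this
            linarith
          · exact h
        have q1 : 0 < q 1 := by
          rcases (hq0 1).eq_or_lt with h | h
          · have := z2 1 h.symm
            simp at this
            linarith
          · exact h
        simp only [Fin.sum_univ_two, Matrix.cons_val_zero, Matrix.cons_val_one] at r1 r2 hqs
        have hsum : ((1-b)^2 + b^2) * (1 / q 0 + 1 / q 1) < 2 * (1 + T) := by
          have : ((1-b)^2 + b^2) * (1 / q 0 + 1 / q 1) =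
            ((1-b)^2 / q 0 + b^2 / q 1) + (b^2 / q 0 + (1-b)^2 / q 1) := by ring
          linarith
        have h4 : 4 ≤ 1 / q 0 + 1 / q 1 := by
          rw [div_add_div _ _ q0.ne' q1.ne', le_div_iff₀ (by positivity)]
          nlinarith [sq_nonneg (q 0 - q 1)]
        have := mul_le_mul_of_nonneg_left h4 (show 0 ≤ (1-b)^2 + b^2 by positivity)
        nlinarith
    linarith

lemma exp_chord2 (c t A B : ℝ) (h0 : 0.85 ≤ t) (h1 : t ≤ 1)
    (hA : Real.exp (-(c * 0.85)) ≤ A) (hB : Real.exp (-c) ≤ B) :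
    Real.exp (-(c * t)) ≤ A + (B - A) * ((t - 0.85) / 0.15) := by
  have := convexOn_exp.2 (Set.mem_univ (-(c * 0.85))) (Set.mem_univ (-c))
    (show 0 ≤ 1 - (t - 0.85) / 0.15 by rw [sub_nonneg, div_le_one (by norm_num)]; linarith)
    (show 0 ≤ (t - 0.85) / 0.15 from div_nonneg (by linarith) (by norm_num)) (by ring)
  simp only [smul_eq_mul] at this
  have e : (1 - (t - 0.85) / 0.15) * -(c * 0.85) + (t - 0.85) / 0.15 * -c = -(c * t) := by
    ring
  rw [e] at this
  have k1 : 0 ≤ 1 - (t - 0.85) / 0.15 := by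
    rw [sub_nonneg, div_le_one (by norm_num)]; linarith
  have k2 : 0 ≤ (t - 0.85) / 0.15 := div_nonneg (by linarith) (by norm_num)
  have := mul_le_mul_of_nonneg_left hA k1
  have := mul_le_mul_of_nonneg_left hB k2
  linarith

theorem minimax_tail_lower_bound (n d : ℕ) (hdn : d ≤ n) (hd : 2 ≤ d)
    (δ : ℝ) (hδl : Real.exp (-(n : ℝ)) < δ) (hδu : δ < Real.exp (-1)) :
    ∃ F : Finset (Fin d → ℝ), F.card = d ∧
      (∀ q ∈ F, (∀ j, 0 ≤ q j) ∧ (∑ j, q j = 1) ∧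
        (Finset.univ.filter (fun j => q j ≠ 0)).card ≤ 2) ∧
      ∀ Φ : (Fin n → Fin d) → (Fin d → ℝ),
        (∀ x, (∀ j, 0 ≤ Φ x j) ∧ ∑ j, Φ x j = 1) →
        ∃ p ∈ F,
          δ ≤ sampleProb p {x |
            ENNReal.ofReal (0.15 * (Real.sqrt d * Real.log (1 / δ) / n
              + (d : ℝ) * Real.log (1 / δ) ^ 2 / n ^ 2)) ≤ chiSqE p (Φ x)} := by
  have hδ0 : 0 < δ := (Real.exp_pos _).trans hδl
  have hn : (0:ℝ) < n := by exact_mod_cast (by omega : 0 < n)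
  obtain ⟨t, ht⟩ : ∃ t, t = Real.log (1 / δ) / n := ⟨_, rfl⟩
  have hL : Real.log (1 / δ) = - Real.log δ := by simp
  have hlog : Real.log δ = n * (-t) := by
    rw [ht, hL]; field_simp
  have l1 : -(n:ℝ) < Real.log δ := by rwa [Real.lt_log_iff_exp_lt hδ0]
  have l2 : Real.log δ < -1 := by rwa [Real.log_lt_iff_lt_exp hδ0]
  have ht0 : 0 < t := by
    rw [ht, hL]; apply div_pos _ hn; linarith
  have ht1 : t < 1 := by
    rw [ht, hL, div_lt_one hn]; linarith
  have hδe : δ = Real.exp (-t) ^ n := by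
    rw [← Real.exp_nat_mul, ← hlog, Real.exp_log hδ0]
  have hTe : 0.15 * (Real.sqrt d * Real.log (1 / δ) / n
              + (d : ℝ) * Real.log (1 / δ) ^ 2 / n ^ 2)
      = 0.15 * (Real.sqrt d * t + d * t ^ 2) := by
    rw [ht]; ring
  rw [hTe]
  by_cases h : d = 2 → t ≤ 0.85
  · have ha0 : 0 < 1 - Real.exp (-t) := by
      have : Real.exp (-t) < 1 := by rw [Real.exp_lt_one_iff]; linarith
      linarith
    have ha1 : 1 - Real.exp (-t) < 1 := by linarith [Real.exp_pos (-t)]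
    exact scheme n d hd (1 - Real.exp (-t)) _ δ ha0 ha1 (by rw [hδe]; simp)
      (core_all d hd t _ ht0 ht1 rfl h)
  · push Not at h
    obtain ⟨rfl, h85⟩ := h
    have hs : Real.sqrt ((2:ℕ):ℝ) ≤ 1.41422 := by
      rw [Real.sqrt_le_left (by norm_num)]; norm_num
    obtain ⟨b, hb⟩ : ∃ b : ℝ, b = (1 - (0.673 + 0.57 * (t - 0.925))) / 2 := ⟨_, rfl⟩
    have c2 := exp_chord2 2 t 0.1848 0.1421 h85.le ht1.le
      (exp_neg_le2 _ _ (by norm_num) 0.4298 (by norm_num) (by norm_num) (by norm_num))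
      (exp_neg_le2 _ _ (by norm_num) 0.3765 (by norm_num) (by norm_num) (by norm_num))
    have c3 := exp_chord2 1.5 t 0.2994 0.2301 h85.le ht1.le
      (exp_neg_le2 _ _ (by norm_num) 0.54 (by norm_num) (by norm_num) (by norm_num))
      (exp_neg_le2 _ _ (by norm_num) 0.479 (by norm_num) (by norm_num) (by norm_num))
    have e0 : (t - 0.85) / 0.15 = (t - 0.85) * (20 / 3) := by ring
    rw [e0] at c2 c3
    have hb1 : 0.142 ≤ b := by linarith
    have hb2 : b ≤ 0.185 := by linarith
    refine scheme2 n b _ δ (by linarith) (by linarith) ?_ ?_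
    · have e : 1 - 2 * b = 0.673 + 0.57 * (t - 0.925) := by rw [hb]; ring
      rw [e]
      push_cast at hs ⊢
      nlinarith [sq_nonneg (t - 0.925)]
    · rw [hδe]
      apply symS_ge b _ (by linarith) (by linarith) (Real.exp_pos _).le _ _ n hdn
      · rw [← Real.exp_nat_mul]
        have e : ((2:ℕ):ℝ) * -t = -(2 * t) := by push_cast; ring
        rw [e]
        linarith
      · have e : Real.exp (-t) ^ 3 = Real.exp (-(1.5 * t)) ^ 2 := by
          rw [← Real.exp_nat_mul, ← Real.exp_nat_mul]; congr 1; push_cast; ring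
        rw [e]
        have h1 : Real.exp (-(1.5 * t)) ≤ 1.62 * b := by linarith
        have h2 := pow_le_pow_left₀ (Real.exp_pos _).le h1 2
        nlinarith [sq_nonneg b]
end

section
/- For all real numbers p ≥ 0 and q > 0 such that q ≥ p/8, one has (√p − √q)² ≤ (p − q)²/q ≤ 15·(√p − √q)². -/
/-- Pointwise χ²-loss term `F(p, q) = (p - q)² / q` is comparable to the squared
Hellinger term `(√p - √q)²` whenever `q ≥ p/8`. -/
theorem chiSq_term_hellinger_comparison (p q : ℝ) (hp : 0 ≤ p) (hq : 0 < q)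
    (h : p / 8 ≤ q) :
    (Real.sqrt p - Real.sqrt q) ^ 2 ≤ (p - q) ^ 2 / q ∧
      (p - q) ^ 2 / q ≤ 15 * (Real.sqrt p - Real.sqrt q) ^ 2 := by
  have ha := Real.sqrt_nonneg p
  have hb := Real.sqrt_pos.mpr hq
  have hpa := Real.sq_sqrt hp
  have hqb := Real.sq_sqrt hq.le
  generalize Real.sqrt p = a at *
  generalize Real.sqrt q = b at *
  subst hpa hqb
  have h3 : a ≤ 3 * b := by
    by_contra hc
    push Not at hc
    nlinarith
  have hab : 0 ≤ a * b := mul_nonneg ha hb.le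
  have e : (a ^ 2 - b ^ 2) ^ 2 = (a - b) ^ 2 * (a + b) ^ 2 := by ring
  have h1 : b ^ 2 ≤ (a + b) ^ 2 := by nlinarith
  have h2 : (a + b) ^ 2 ≤ 15 * b ^ 2 := by nlinarith
  rw [le_div_iff₀ hq, div_le_iff₀ hq, e]
  constructor
  · exact mul_le_mul_of_nonneg_left h1 (sq_nonneg _)
  · calc _ ≤ (a - b) ^ 2 * (15 * b ^ 2) := mul_le_mul_of_nonneg_left h2 (sq_nonneg _)
      _ = _ := by ring
end

section
/- Fix λ ≥ 1 and λ_j ≥ 0, and let Ñ_j be a random variable with Ñ_j ~ Poisson(λ_j/2). Let W^{(λ)} = W/λ where W is a nonnegative random variable with tail P(W ≥ t²) = e^{-t/14} for all t ≥ 0. Then the random variable V_j^{(λ)} = (λ_j²/λ) · 1{Ñ_j ≤ λ_j/4} is stochastically dominated by W^{(λ)}: for every real w, P(V_j^{(λ)} ≥ w) ≤ P(W^{(λ)} ≥ w). -/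
open MeasureTheory
open scoped ENNReal

theorem upper_envelope {Ω Ω' : Type*} [MeasurableSpace Ω] [MeasurableSpace Ω']
    (μ : Measure Ω) [IsProbabilityMeasure μ]
    (ν : Measure Ω') [IsProbabilityMeasure ν]
    (lam : ℝ) (hlam : 1 ≤ lam)
    (lamj : ℝ) (hlamj : 0 ≤ lamj)
    (N : Ω → ℕ)
    (hpois : ∀ k : ℕ, μ {ω | N ω = k} =
      ENNReal.ofReal (Real.exp (-(lamj / 2)) * (lamj / 2) ^ k / k.factorial))
    (W : Ω' → ℝ) (hWnn : ∀ ω, 0 ≤ W ω)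
    (hWtail : ∀ t : ℝ, 0 ≤ t → ν {ω | t ^ 2 ≤ W ω} = ENNReal.ofReal (Real.exp (-t / 14))) :
    ∀ w : ℝ,
      μ {ω | w ≤ (lamj ^ 2 / lam) * (if (N ω : ℝ) ≤ lamj / 4 then 1 else 0)} ≤
        ν {ω | w ≤ W ω / lam} := by
  intro w
  have hl : 0 < lam := by linarith
  rcases le_or_gt w 0 with hw | hw
  · have : {ω | w ≤ W ω / lam} = Set.univ := by
      ext ω
      simp only [Set.mem_setOf_eq, Set.mem_univ, iff_true]
      exact hw.trans (div_nonneg (hWnn ω) hl.le)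
    rw [this, measure_univ]
    exact prob_le_one
  rcases lt_or_ge (lamj ^ 2 / lam) w with hw2 | hw2
  · have : {ω | w ≤ (lamj ^ 2 / lam) * (if (N ω : ℝ) ≤ lamj / 4 then 1 else 0)} = ∅ := by
      ext ω
      simp only [Set.mem_setOf_eq, Set.mem_empty_iff_false, iff_false, not_le]
      split_ifs <;> simp <;> linarith
    rw [this]
    simp
  have h1 : {ω | w ≤ (lamj ^ 2 / lam) * (if (N ω : ℝ) ≤ lamj / 4 then 1 else 0)} ⊆
      ⋃ k ∈ Finset.range (⌊lamj / 4⌋₊ + 1), {ω | N ω = k} := by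
    intro ω hω
    simp only [Set.mem_setOf_eq] at hω
    have hN : (N ω : ℝ) ≤ lamj / 4 := by
      by_contra h
      rw [if_neg h] at hω
      linarith
    simp only [Set.mem_iUnion, Set.mem_setOf_eq, Finset.mem_range]
    exact ⟨N ω, Nat.lt_succ_of_le (Nat.le_floor hN), rfl⟩
  have h2 : {ω | lamj ^ 2 ≤ W ω} ⊆ {ω | w ≤ W ω / lam} := by
    intro ω hω
    simp only [Set.mem_setOf_eq] at hω ⊢
    exact hw2.trans (by gcongr)
  refine (measure_mono h1).trans (le_trans ?_ (measure_mono h2))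
  rw [hWtail lamj hlamj]
  refine (measure_biUnion_finset_le _ _).trans ?_
  simp only [hpois]
  rw [← ENNReal.ofReal_sum_of_nonneg (fun k _ => by positivity)]
  apply ENNReal.ofReal_le_ofReal
  calc ∑ k ∈ Finset.range (⌊lamj / 4⌋₊ + 1),
        Real.exp (-(lamj / 2)) * (lamj / 2) ^ k / k.factorial
      ≤ ∑ k ∈ Finset.range (⌊lamj / 4⌋₊ + 1),
        (Real.exp (-(lamj / 2)) * Real.exp (Real.log 2 * (lamj / 4))) *
          ((lamj / 4) ^ k / k.factorial) := by
        apply Finset.sum_le_sum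
        intro k hk
        have hk' : (k : ℝ) ≤ lamj / 4 :=
          (Nat.le_floor_iff (by positivity)).1 (Nat.lt_succ_iff.1 (Finset.mem_range.1 hk))
        have h2k : (2 : ℝ) ^ k ≤ Real.exp (Real.log 2 * (lamj / 4)) := by
          rw [← Real.rpow_natCast, Real.rpow_def_of_pos (by norm_num)]
          apply Real.exp_le_exp.2
          exact mul_le_mul_of_nonneg_left hk' (Real.log_nonneg (by norm_num))
        have e : lamj / 2 = 2 * (lamj / 4) := by ring
        have : (lamj / 2) ^ k = 2 ^ k * (lamj / 4) ^ k := by rw [e, mul_pow]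
        rw [this, ← mul_assoc, mul_div_assoc]
        gcongr
    _ ≤ (Real.exp (-(lamj / 2)) * Real.exp (Real.log 2 * (lamj / 4))) * Real.exp (lamj / 4) := by
        rw [← Finset.mul_sum]
        gcongr
        exact Real.sum_le_exp_of_nonneg (by positivity) _
    _ ≤ Real.exp (-lamj / 14) := by
        rw [← Real.exp_add, ← Real.exp_add]
        apply Real.exp_le_exp.2
        nlinarith [Real.log_two_lt_d9]
end

section
/- Let n ≥ 1, d ≥ 1, let P = (p_1, …, p_d) ∈ Δ_d, and let P̂_n be the Laplace estimator p̂_j = (N_j + 1)/(n + d) built from an i.i.d. sample X_1, …, X_n from P. Then the expected χ²-divergence satisfies the exact identity E[χ²(P, P̂_n)] = (d − 1)/(n + 1) − ((n + d)/(n + 1)) · Σ_{j=1}^d p_j (1 − p_j)^{n+1}, and consequently E[χ²(P, P̂_n)] ≤ (d − 1)/(n + 1) ≤ d/n. -/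
open Finset

/-- Expectation of a real functional of the i.i.d. sample of size `n` from `p`. -/
noncomputable def sampleExp {n d : ℕ} (p : Fin d → ℝ) (f : (Fin n → Fin d) → ℝ) : ℝ :=
  ∑ x : Fin n → Fin d, (∏ i, p (x i)) * f x


lemma aux_prod {n d : ℕ} (p : Fin d → ℝ) (hp1 : ∑ j, p j = 1) (j : Fin d) (t : ℝ) :
    ∑ x : Fin n → Fin d, (∏ i, p (x i)) * t ^ (count x j) = (1 - p j + p j * t) ^ n := by
  have h1 : ∀ x : Fin n → Fin d, (∏ i, p (x i)) * t ^ (count x j)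
      = ∏ i, (p (x i) * if x i = j then t else 1) := by
    intro x
    rw [Finset.prod_mul_distrib, Finset.prod_ite]
    simp [count]
  have h2 : ∑ a, (p a * if a = j then t else 1) = 1 - p j + p j * t := by
    have : ∀ a, (p a * if a = j then t else 1) = p a + if a = j then p a * (t - 1) else 0 := by
      intro a; split_ifs <;> ring
    simp only [this, Finset.sum_add_distrib, hp1]
    simp
    ring
  rw [Finset.sum_congr rfl (fun x _ => h1 x), ← h2]
  exact (Fintype.sum_pow (fun a => p a * if a = j then t else 1) n).symm

lemma aux_inv {n d : ℕ} (p : Fin d → ℝ) (hp1 : ∑ j, p j = 1) (j : Fin d) :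
    p j * ∑ x : Fin n → Fin d, (∏ i, p (x i)) * (1 / ((count x j : ℝ) + 1))
      = (1 - (1 - p j) ^ (n + 1)) / ((n : ℝ) + 1) := by
  have hn : (n : ℝ) + 1 ≠ 0 := by positivity
  have h1 : ∑ x : Fin n → Fin d, (∏ i, p (x i)) * (1 / ((count x j : ℝ) + 1))
      = ∫ t in (0:ℝ)..1, (1 - p j + p j * t) ^ n := by
    simp_rw [← aux_prod p hp1 j]
    rw [intervalIntegral.integral_finsetSum]
    · refine Finset.sum_congr rfl fun x _ => ?_
      rw [intervalIntegral.integral_const_mul, integral_pow]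
      simp
    · intro x _
      exact Continuous.intervalIntegrable (by fun_prop) _ _
  rw [h1, ← intervalIntegral.integral_const_mul]
  have hd : ∀ t ∈ Set.uIcc (0:ℝ) 1, HasDerivAt
      (fun t : ℝ => (1 - p j + p j * t) ^ (n + 1) / ((n : ℝ) + 1))
      (p j * (1 - p j + p j * t) ^ n) t := by
    intro t _
    have h := ((((hasDerivAt_id t).const_mul (p j)).const_add (1 - p j)).pow (n + 1)).div_const
      ((n : ℝ) + 1)
    refine h.congr_deriv ?_
    simp
    field_simp
  rw [intervalIntegral.integral_eq_sub_of_hasDerivAt hd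
    (Continuous.intervalIntegrable (by fun_prop) _ _)]
  simp
  field_simp

lemma aux_chi {n d : ℕ} (hd : 1 ≤ d) (p : Fin d → ℝ) (hp1 : ∑ j, p j = 1) (x : Fin n → Fin d) :
    chiSq p (fun j => ((count x j : ℝ) + 1) / ((n : ℝ) + d))
      = ∑ j, ((n : ℝ) + d) * p j ^ 2 * (1 / ((count x j : ℝ) + 1)) - 1 := by
  have hd' : (1 : ℝ) ≤ d := by exact_mod_cast hd
  have hnd : (n : ℝ) + d ≠ 0 := by positivity
  have hc : ∑ j, (count x j : ℝ) = n := by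
    have : ∑ j, count x j = n := by
      have := Finset.card_eq_sum_card_fiberwise (f := x) (s := Finset.univ) (t := Finset.univ)
        (by simp)
      simpa [count] using this.symm
    exact_mod_cast this
  have h : ∀ j, (p j - ((count x j : ℝ) + 1) / ((n : ℝ) + d)) ^ 2 /
      (((count x j : ℝ) + 1) / ((n : ℝ) + d)) =
      ((n : ℝ) + d) * p j ^ 2 * (1 / ((count x j : ℝ) + 1)) - 2 * p j +
        ((count x j : ℝ) + 1) / ((n : ℝ) + d) := by
    intro j
    have : (count x j : ℝ) + 1 ≠ 0 := by positivity
    field_simp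
    ring
  unfold chiSq
  simp only [h]
  rw [Finset.sum_add_distrib, Finset.sum_sub_distrib, ← Finset.mul_sum, hp1, ← Finset.sum_div,
    Finset.sum_add_distrib, hc]
  simp only [Finset.sum_const, Finset.card_univ, Fintype.card_fin, nsmul_eq_mul, mul_one]
  rw [div_self hnd]
  ring

theorem laplace_expected_chiSq (n d : ℕ) (hn : 1 ≤ n) (hd : 1 ≤ d)
    (p : Fin d → ℝ) (hp0 : ∀ j, 0 ≤ p j) (hp1 : ∑ j, p j = 1) :
    sampleExp p (fun x : Fin n → Fin d =>
        chiSq p (fun j => ((count x j : ℝ) + 1) / ((n : ℝ) + d))) =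
      ((d : ℝ) - 1) / ((n : ℝ) + 1)
        - (((n : ℝ) + d) / ((n : ℝ) + 1)) * ∑ j, p j * (1 - p j) ^ (n + 1) ∧
    sampleExp p (fun x : Fin n → Fin d =>
        chiSq p (fun j => ((count x j : ℝ) + 1) / ((n : ℝ) + d))) ≤
      ((d : ℝ) - 1) / ((n : ℝ) + 1) ∧
    ((d : ℝ) - 1) / ((n : ℝ) + 1) ≤ (d : ℝ) / n := by
  have key : sampleExp p (fun x : Fin n → Fin d =>
        chiSq p (fun j => ((count x j : ℝ) + 1) / ((n : ℝ) + d))) =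
      ((d : ℝ) - 1) / ((n : ℝ) + 1)
        - (((n : ℝ) + d) / ((n : ℝ) + 1)) * ∑ j, p j * (1 - p j) ^ (n + 1) := by
    have hn1 : (n : ℝ) + 1 ≠ 0 := by positivity
    have htot : ∑ x : Fin n → Fin d, ∏ i, p (x i) = 1 := by
      have := Fintype.sum_pow p n
      rw [hp1, one_pow] at this
      exact this.symm
    unfold sampleExp
    simp only [aux_chi hd p hp1, mul_sub, mul_one]
    rw [Finset.sum_sub_distrib, htot]
    simp only [Finset.mul_sum]
    rw [Finset.sum_comm]
    have h : ∀ j, ∑ x : Fin n → Fin d, (∏ i, p (x i)) *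
        (((n : ℝ) + d) * p j ^ 2 * (1 / ((count x j : ℝ) + 1))) =
        ((n : ℝ) + d) / ((n : ℝ) + 1) * p j
          - ((n : ℝ) + d) / ((n : ℝ) + 1) * (p j * (1 - p j) ^ (n + 1)) := by
      intro j
      have e : ∑ x : Fin n → Fin d, (∏ i, p (x i)) *
        (((n : ℝ) + d) * p j ^ 2 * (1 / ((count x j : ℝ) + 1))) =
        ((n : ℝ) + d) * p j * (p j * ∑ x : Fin n → Fin d, (∏ i, p (x i)) *
          (1 / ((count x j : ℝ) + 1))) := by
        simp only [Finset.mul_sum]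
        exact Finset.sum_congr rfl fun x _ => by ring
      rw [e, aux_inv p hp1 j]
      ring
    simp only [h]
    rw [Finset.sum_sub_distrib, ← Finset.mul_sum, hp1]
    field_simp
    ring
  have hd' : (1 : ℝ) ≤ d := by exact_mod_cast hd
  have hn' : (1 : ℝ) ≤ n := by exact_mod_cast hn
  refine ⟨key, ?_, ?_⟩
  · rw [key]
    have hs : 0 ≤ ∑ j, p j * (1 - p j) ^ (n + 1) := by
      refine Finset.sum_nonneg fun j _ => mul_nonneg (hp0 j) (pow_nonneg ?_ _)
      have := Finset.single_le_sum (fun i _ => hp0 i) (Finset.mem_univ j)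
      linarith
    have : 0 ≤ (((n : ℝ) + d) / ((n : ℝ) + 1)) * ∑ j, p j * (1 - p j) ^ (n + 1) := by positivity
    linarith
  · rw [div_le_div_iff₀ (by linarith) (by linarith)]
    nlinarith
end
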